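/- arXiv:1707.01528 — 3 statements merged into one kernel-verified Lean document; each statement's English description precedes it below -/
import Mathlib

section
/- Tsarev compatibility of the system for R_i (Proposition, part (i), identity (c101)): Let U ⊆ ℝ^N be open with coordinates λ₁,…,λ_N, and let ξ₁,…,ξ_N, τ : U → ℂ be C² functions with τ taking values in the upper half-plane, satisfying the elliptic Gibbons–Tsarev system. Define Γ_{ij} := −(1/(4πi)) (S'(ξ_j,τ)/S'(ξ_i,τ)) S''(ξ_i−ξ_j,τ) ∂τ/∂λ_j for i ≠ j. Assume all theta-function values appearing in denominators (including S'(ξ_i,τ)) are nonzero on U. Then for any pairwise distinct indices i, j, k one has ∂Γ_{ij}/∂λ_k = Γ_{ij}Γ_{jk} + Γ_{ik}Γ_{kj} − Γ_{ik}Γ_{ij} on U; in particular ∂Γ_{ij}/∂λ_k = ∂Γ_{ik}/∂λ_j, so the linear system ∂R_i/∂λ_j = Γ_{ij}(R_j − R_i) (i ≠ j) is compatible in Tsarev's sense. -/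
open Complex

/-- Jacobi theta function θ₁(u,τ). -/
noncomputable def theta1 (u τ : ℂ) : ℂ :=
  -∑' k : ℤ, Complex.exp ((Real.pi : ℂ) * Complex.I * τ * ((k : ℂ) + 1/2)^2
      + 2 * (Real.pi : ℂ) * Complex.I * (u + 1/2) * ((k : ℂ) + 1/2))

/-- Jacobi theta function θ₂(u,τ). -/
noncomputable def theta2 (u τ : ℂ) : ℂ :=
  ∑' k : ℤ, Complex.exp ((Real.pi : ℂ) * Complex.I * τ * ((k : ℂ) + 1/2)^2
      + 2 * (Real.pi : ℂ) * Complex.I * u * ((k : ℂ) + 1/2))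

/-- Jacobi theta function θ₃(u,τ). -/
noncomputable def theta3 (u τ : ℂ) : ℂ :=
  ∑' k : ℤ, Complex.exp ((Real.pi : ℂ) * Complex.I * τ * (k : ℂ)^2
      + 2 * (Real.pi : ℂ) * Complex.I * u * (k : ℂ))

/-- Jacobi theta function θ₄(u,τ). -/
noncomputable def theta4 (u τ : ℂ) : ℂ :=
  ∑' k : ℤ, Complex.exp ((Real.pi : ℂ) * Complex.I * τ * (k : ℂ)^2
      + 2 * (Real.pi : ℂ) * Complex.I * (u + 1/2) * (k : ℂ))

/-- ζ_a(u,τ) = θ_a'(u,τ)/θ_a(u,τ). -/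
noncomputable def zeta1 (u τ : ℂ) : ℂ := deriv (fun v => theta1 v τ) u / theta1 u τ
noncomputable def zeta2 (u τ : ℂ) : ℂ := deriv (fun v => theta2 v τ) u / theta2 u τ
noncomputable def zeta3 (u τ : ℂ) : ℂ := deriv (fun v => theta3 v τ) u / theta3 u τ
noncomputable def zeta4 (u τ : ℂ) : ℂ := deriv (fun v => theta4 v τ) u / theta4 u τ

/-- ℘_a(u,τ) = −∂_u ζ_a(u,τ). -/
noncomputable def wp1 (u τ : ℂ) : ℂ := -deriv (fun v => zeta1 v τ) u
noncomputable def wp2 (u τ : ℂ) : ℂ := -deriv (fun v => zeta2 v τ) u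
noncomputable def wp1' (u τ : ℂ) : ℂ := deriv (fun v => wp1 v τ) u
noncomputable def wp2' (u τ : ℂ) : ℂ := deriv (fun v => wp2 v τ) u

/-- S'(u,τ) = ζ₁(u,τ) − ζ₄(u,τ). -/
noncomputable def Sp (u τ : ℂ) : ℂ := zeta1 u τ - zeta4 u τ
/-- S''(u,τ) = ∂_u S'(u,τ). -/
noncomputable def Spp (u τ : ℂ) : ℂ := deriv (fun v => Sp v τ) u
/-- S'''(u,τ) = ∂_u S''(u,τ). -/
noncomputable def Sppp (u τ : ℂ) : ℂ := deriv (fun v => Spp v τ) u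

/-- Partial derivative in the j-th coordinate of a ℂ-valued function on ℝ^N. -/
noncomputable def pdC {N : ℕ} (j : Fin N) (f : (Fin N → ℝ) → ℂ) (x : Fin N → ℝ) : ℂ :=
  fderiv ℝ f x (Pi.single j 1)

/-- Partial derivative in the j-th coordinate of an ℝ-valued function on ℝ^d. -/
noncomputable def pd {d : ℕ} (j : Fin d) (f : (Fin d → ℝ) → ℝ) (x : Fin d → ℝ) : ℝ :=
  fderiv ℝ f x (Pi.single j 1)

/-- Γ_{ij} = −(1/(4πi)) (S'(ξ_j,τ)/S'(ξ_i,τ)) S''(ξ_i−ξ_j,τ) ∂τ/∂λ_j. -/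
noncomputable def Gam {N : ℕ} (ξ : Fin N → (Fin N → ℝ) → ℂ) (τ : (Fin N → ℝ) → ℂ)
    (i j : Fin N) (x : Fin N → ℝ) : ℂ :=
  -(1 / (4 * (Real.pi : ℂ) * Complex.I)) * (Sp (ξ j x) (τ x) / Sp (ξ i x) (τ x))
    * Spp (ξ i x - ξ j x) (τ x) * pdC j τ x

/-! ### Weighted theta series -/

noncomputable def Ft (w : ℤ → ℂ) (k : ℕ) (m : ℤ) (u τ : ℂ) : ℂ :=
  w m * ((Real.pi : ℂ) * I * m) ^ k * jacobiTheta₂_term m (u / 2) (τ / 4)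

noncomputable def W (w : ℤ → ℂ) (k : ℕ) (u τ : ℂ) : ℂ := ∑' m : ℤ, Ft w k m u τ

noncomputable def Bd (k : ℕ) (S T : ℝ) (m : ℤ) : ℝ :=
  Real.pi ^ k * ((|m| : ℝ) ^ k * Real.exp (-Real.pi * (T * m ^ 2 - 2 * S * |m|)))

lemma Bd_summable (k : ℕ) (S : ℝ) {T : ℝ} (hT : 0 < T) : Summable (Bd k S T) := by
  have := (summable_pow_mul_jacobiTheta₂_term_bound S hT k).mul_left (Real.pi ^ k)
  unfold Bd
  simpa only [Int.cast_abs] using this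

lemma Ft_le {w : ℤ → ℂ} (hw : ∀ m, ‖w m‖ ≤ 1) (k : ℕ) {S T : ℝ} (hT : 0 < T) {u τ : ℂ}
    (hu : |(u / 2).im| ≤ S) (hτ : T ≤ (τ / 4).im) (m : ℤ) : ‖Ft w k m u τ‖ ≤ Bd k S T m := by
  have h1 := norm_jacobiTheta₂_term_le hT hu hτ m
  unfold Ft Bd
  rw [norm_mul, norm_mul, norm_pow, norm_mul, norm_mul, norm_I, Complex.norm_of_nonneg Real.pi_pos.le,
    mul_one, norm_intCast, mul_pow]
  calc _ ≤ 1 * (Real.pi ^ k * (|(m:ℝ)|) ^ k) * Real.exp (-Real.pi * (T * m ^ 2 - 2 * S * |m|)) := by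
        gcongr
        exact hw m
    _ = _ := by push_cast; ring

lemma im_div4 {τ : ℂ} : (τ / 4).im = τ.im / 4 := by
  rw [show τ / 4 = ((1/4 : ℝ) : ℂ) * τ by push_cast; ring, Complex.im_ofReal_mul]; ring

lemma im_div2 {τ : ℂ} : (τ / 2).im = τ.im / 2 := by
  rw [show τ / 2 = ((1/2 : ℝ) : ℂ) * τ by push_cast; ring, Complex.im_ofReal_mul]; ring

lemma Ft_summable_norm {w : ℤ → ℂ} (hw : ∀ m, ‖w m‖ ≤ 1) (k : ℕ) (u : ℂ) {τ : ℂ}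
    (hτ : 0 < τ.im) : Summable (fun m => ‖Ft w k m u τ‖) := by
  have h4 : 0 < (τ / 4).im := by rw [im_div4]; positivity
  refine Summable.of_nonneg_of_le (fun _ => norm_nonneg _) (fun m => ?_)
    (Bd_summable k |(u/2).im| h4)
  exact Ft_le hw k h4 le_rfl le_rfl m

lemma Ft_summable {w : ℤ → ℂ} (hw : ∀ m, ‖w m‖ ≤ 1) (k : ℕ) (u : ℂ) {τ : ℂ}
    (hτ : 0 < τ.im) : Summable (fun m => Ft w k m u τ) := (Ft_summable_norm hw k u hτ).of_norm

/-- the constant `1/(4πi)` -/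
noncomputable def kap : ℂ := 1 / (4 * (Real.pi : ℂ) * Complex.I)

lemma Ft_hasFDerivAt (w : ℤ → ℂ) (k : ℕ) (m : ℤ) (p : ℂ × ℂ) :
    HasFDerivAt (fun p : ℂ × ℂ => Ft w k m p.1 p.2)
      (Ft w (k+1) m p.1 p.2 • ContinuousLinearMap.fst ℂ ℂ ℂ
        + (kap * Ft w (k+2) m p.1 p.2) • ContinuousLinearMap.snd ℂ ℂ ℂ) p := by
  have hpi : (Real.pi : ℂ) ≠ 0 := by exact_mod_cast Real.pi_ne_zero
  have h1 : HasFDerivAt (fun p : ℂ × ℂ => (p.1 / 2, p.2 / 4))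
    (((2:ℂ)⁻¹ • ContinuousLinearMap.fst ℂ ℂ ℂ).prod ((4:ℂ)⁻¹ • ContinuousLinearMap.snd ℂ ℂ ℂ)) p := by
    refine HasFDerivAt.prodMk ?_ ?_
    · simpa [div_eq_inv_mul] using (hasFDerivAt_fst (𝕜 := ℂ) (p := p)).const_mul (2:ℂ)⁻¹
    · simpa [div_eq_inv_mul] using (hasFDerivAt_snd (𝕜 := ℂ) (p := p)).const_mul (4:ℂ)⁻¹
  have h2 := (HasFDerivAt.comp p (hasFDerivAt_jacobiTheta₂_term m (p.1/2) (p.2/4)) h1).const_mul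
    (w m * ((Real.pi : ℂ) * I * m) ^ k)
  refine (h2.congr_fderiv ?_)
  ext
  · simp [Ft, jacobiTheta₂_term_fderiv, jacobiTheta₂_term]
    ring
  · simp [Ft, jacobiTheta₂_term_fderiv, jacobiTheta₂_term, kap]
    field_simp
    ring_nf
    simp

lemma W_hasFDerivAt {w : ℤ → ℂ} (hw : ∀ m, ‖w m‖ ≤ 1) (k : ℕ) (u : ℂ) {τ : ℂ} (hτ : 0 < τ.im) :
    HasFDerivAt (fun p : ℂ × ℂ => W w k p.1 p.2)
      (W w (k+1) u τ • ContinuousLinearMap.fst ℂ ℂ ℂ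
        + (kap * W w (k+2) u τ) • ContinuousLinearMap.snd ℂ ℂ ℂ) (u, τ) := by
  set S : ℝ := |(u/2).im| + 1
  set T : ℝ := (τ/4).im / 2
  have h4 : 0 < (τ / 4).im := by rw [im_div4]; positivity
  have hT : 0 < T := by positivity
  let V : Set (ℂ × ℂ) := {u : ℂ | |(u/2).im| < S} ×ˢ {τ : ℂ | T < (τ/4).im}
  have hV1 : {u : ℂ | |(u/2).im| < S} = (fun u : ℂ => u.im) ⁻¹' (Set.Ioo (-(2*S)) (2*S)) := by
    ext v
    simp only [Set.mem_ofPred_eq, Set.mem_preimage, Set.mem_Ioo, im_div2, abs_lt]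
    constructor <;> rintro ⟨h1, h2⟩ <;> constructor <;> linarith
  have hV2 : {τ : ℂ | T < (τ/4).im} = (fun u : ℂ => u.im) ⁻¹' (Set.Ioi (4*T)) := by
    ext v
    simp only [Set.mem_ofPred_eq, Set.mem_preimage, Set.mem_Ioi, im_div4]
    constructor <;> intro h1 <;> linarith
  have hVo : IsOpen V := by
    refine IsOpen.prod ?_ ?_
    · rw [hV1]; exact isOpen_Ioo.preimage Complex.continuous_im
    · rw [hV2]; exact isOpen_Ioi.preimage Complex.continuous_im
  have hVc : IsPreconnected V := by
    refine IsPreconnected.prod ?_ ?_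
    · rw [hV1]; exact ((convex_Ioo (-(2*S)) (2*S)).linear_preimage Complex.imLm).isPreconnected
    · rw [hV2]; exact ((convex_Ioi (4*T)).linear_preimage Complex.imLm).isPreconnected
  have hmem : (u, τ) ∈ V := by
    refine ⟨?_, ?_⟩
    · simp [S]
    · simp only [Set.mem_ofPred_eq, T]; linarith
  have key := hasFDerivAt_tsum_of_isPreconnected (𝕜 := ℂ)
    (f := fun m (p : ℂ × ℂ) => Ft w k m p.1 p.2)
    (f' := fun m (p : ℂ × ℂ) => Ft w (k+1) m p.1 p.2 • ContinuousLinearMap.fst ℂ ℂ ℂ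
        + (kap * Ft w (k+2) m p.1 p.2) • ContinuousLinearMap.snd ℂ ℂ ℂ)
    (u := fun m => Bd (k+1) S T m + ‖kap‖ * Bd (k+2) S T m)
    ((Bd_summable _ _ hT).add ((Bd_summable _ _ hT).mul_left _)) hVo hVc
    (fun m p _ => Ft_hasFDerivAt w k m p)
    (fun m p hp => by
      obtain ⟨hp1, hp2⟩ := hp
      have b1 := Ft_le hw (k+1) hT (le_of_lt hp1) (le_of_lt hp2) m
      have b2 := Ft_le hw (k+2) hT (le_of_lt hp1) (le_of_lt hp2) m
      have hns (a : ℂ) (f : (ℂ × ℂ) →L[ℂ] ℂ) : ‖a • f‖ = ‖a‖ * ‖f‖ := norm_smul a f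
      refine (norm_add_le _ _).trans (add_le_add ?_ ?_)
      · rw [hns]
        calc _ ≤ ‖Ft w (k+1) m p.1 p.2‖ * 1 := by
              gcongr; exact ContinuousLinearMap.norm_fst_le ..
          _ ≤ _ := by simpa using b1
      · rw [hns]
        calc _ ≤ ‖kap * Ft w (k+2) m p.1 p.2‖ * 1 := by
              gcongr; exact ContinuousLinearMap.norm_snd_le ..
          _ ≤ _ := by
            rw [mul_one, norm_mul]; gcongr)
    hmem (Ft_summable hw k u hτ) hmem
  refine key.congr_fderiv ?_
  have s1 := Ft_summable hw (k+1) u hτ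
  have s2 := (Ft_summable hw (k+2) u hτ).mul_left kap
  rw [Summable.tsum_add (s1.smul_const _) (s2.smul_const _), s1.tsum_smul_const,
    s2.tsum_smul_const, tsum_mul_left]
  rfl

lemma W_hasDerivAt {w : ℤ → ℂ} (hw : ∀ m, ‖w m‖ ≤ 1) (k : ℕ) (u : ℂ) {τ : ℂ} (hτ : 0 < τ.im) :
    HasDerivAt (fun v => W w k v τ) (W w (k+1) u τ) u := by
  have h := W_hasFDerivAt hw k u hτ
  have h2 : HasDerivAt (fun v : ℂ => (v, τ)) ((1:ℂ), (0:ℂ)) u :=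
    (hasDerivAt_id u).prodMk (hasDerivAt_const u τ)
  have := h.comp_hasDerivAt u h2
  simpa [Function.comp_def] using this

lemma W_neg {w : ℤ → ℂ} {e : ℂ} (he : ∀ m, w (-m) = e * w m) (k : ℕ) (u τ : ℂ) :
    W w k (-u) τ = e * (-1) ^ k * W w k u τ := by
  unfold W
  rw [← tsum_mul_left, ← (Equiv.neg ℤ).tsum_eq]
  congr 1; ext m
  simp only [Equiv.neg_apply, Ft, he, jacobiTheta₂_term]
  push_cast
  rw [show (2 * (Real.pi:ℂ) * I * -(m:ℂ) * (-u / 2) + Real.pi * I * (-(m:ℂ)) ^ 2 * (τ / 4))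
    = (2 * (Real.pi:ℂ) * I * (m:ℂ) * (u / 2) + Real.pi * I * (m:ℂ) ^ 2 * (τ / 4)) by ring,
    show (Real.pi : ℂ) * I * (-(m:ℂ)) = (-1) * (Real.pi * I * m) by ring, mul_pow]
  ring

noncomputable def w1 (m : ℤ) : ℂ := if Even m then 0 else -(I ^ m)
noncomputable def w2 (m : ℤ) : ℂ := if Even m then 0 else 1
noncomputable def w4 (m : ℤ) : ℂ := if Even m then I ^ m else 0

lemma hw1 : ∀ m, ‖w1 m‖ ≤ 1 := by intro m; unfold w1; split_ifs <;> simp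
lemma hw2 : ∀ m, ‖w2 m‖ ≤ 1 := by intro m; unfold w2; split_ifs <;> simp
lemma hw4 : ∀ m, ‖w4 m‖ ≤ 1 := by intro m; unfold w4; split_ifs <;> simp

lemma I_zpow_two_mul (n : ℤ) : I ^ (2 * n) = (-1 : ℂ) ^ n := by
  rw [zpow_mul]; norm_num

lemma w1_neg (m : ℤ) : w1 (-m) = (-1) * w1 m := by
  unfold w1
  by_cases h : Even m
  · simp [h]
  · rw [if_neg (by simpa using h), if_neg h]
    obtain ⟨n, rfl⟩ := Int.not_even_iff_odd.mp h
    rw [show -(2 * n + 1) = 2 * (-n) + (-1) by ring, zpow_add₀ I_ne_zero, zpow_add₀ I_ne_zero,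
      I_zpow_two_mul, I_zpow_two_mul]
    rw [zpow_neg, ← inv_zpow]
    norm_num
lemma w2_neg (m : ℤ) : w2 (-m) = 1 * w2 m := by simp [w2]
lemma w4_neg (m : ℤ) : w4 (-m) = 1 * w4 m := by
  unfold w4
  by_cases h : Even m
  · rw [if_pos (by simpa using h), if_pos h]
    obtain ⟨n, rfl⟩ := h
    rw [show -(n + n) = 2 * (-n) by ring, ← two_mul,
      I_zpow_two_mul, I_zpow_two_mul]
    rw [zpow_neg, ← inv_zpow]
    norm_num
  · simp [h]

lemma exp_pi_half (m : ℤ) : Complex.exp ((Real.pi : ℂ) * I * m / 2) = I ^ m := by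
  rw [show (Real.pi : ℂ) * I * m / 2 = m * (Real.pi / 2 * I) by ring, Complex.exp_int_mul,
    Complex.exp_pi_div_two_mul_I]

lemma theta1_eq (u τ : ℂ) : theta1 u τ = W w1 0 u τ := by
  unfold theta1 W
  have hinj : Function.Injective (fun k : ℤ => 2 * k + 1) := by intro a b h; simpa using h
  rw [← hinj.tsum_eq (f := fun m => Ft w1 0 m u τ), ← tsum_neg]
  · congr 1; ext k
    have : ¬ Even (2 * k + 1) := by simp
    simp only [Ft, w1, this, if_false, jacobiTheta₂_term]
    rw [← exp_pi_half, neg_mul, neg_mul, pow_zero, mul_one, ← Complex.exp_add]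
    congr 2; push_cast; ring
  · intro m hm
    by_contra h
    apply hm
    have : Even m := by
      rw [← Int.not_odd_iff_even]
      rintro ⟨n, rfl⟩
      exact h ⟨n, rfl⟩
    simp [Ft, w1, this]

lemma theta4_eq (u τ : ℂ) : theta4 u τ = W w4 0 u τ := by
  unfold theta4 W
  have hinj : Function.Injective (fun k : ℤ => 2 * k) := by intro a b h; simpa using h
  rw [← hinj.tsum_eq (f := fun m => Ft w4 0 m u τ)]
  · congr 1; ext k
    have : Even (2 * k) := by simp
    simp only [Ft, w4, this, if_true, jacobiTheta₂_term]
    rw [← exp_pi_half, pow_zero, mul_one, ← Complex.exp_add]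
    congr 1; push_cast; ring
  · intro m hm
    by_contra h
    apply hm
    have : ¬ Even m := by
      rintro ⟨n, rfl⟩
      exact h ⟨n, by simp; ring⟩
    simp [Ft, w4, this]

/-- the bilinear addition formula -/
lemma W_bilinear (x y : ℂ) {T : ℂ} (hT : 0 < T.im) :
    W w1 0 (x + y) T * W w2 0 (x - y) T
      = W w1 0 (2 * x) (2 * T) * W w4 0 (2 * y) (2 * T)
        + W w4 0 (2 * x) (2 * T) * W w1 0 (2 * y) (2 * T) := by
  have hT2 : 0 < (2 * T).im := by simpa using hT
  unfold W
  have a1 := fun u => Ft_summable_norm hw1 0 u hT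
  have a2 := fun u => Ft_summable_norm hw2 0 u hT
  have b1 := fun u => Ft_summable_norm hw1 0 u hT2
  have b4 := fun u => Ft_summable_norm hw4 0 u hT2
  rw [tsum_mul_tsum_of_summable_norm (a1 _) (a2 _), tsum_mul_tsum_of_summable_norm (b1 _) (b4 _),
    tsum_mul_tsum_of_summable_norm (b4 _) (b1 _),
    ← (summable_mul_of_summable_norm (b1 _) (b4 _)).tsum_add
      (summable_mul_of_summable_norm (b4 _) (b1 _))]
  have hinj : Function.Injective (fun p : ℤ × ℤ => (p.1 + p.2, p.1 - p.2)) := by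
    rintro ⟨a, b⟩ ⟨c, d⟩ h
    simp only [Prod.mk.injEq] at h ⊢
    omega
  rw [← hinj.tsum_eq]
  · congr 1; ext ⟨P, Q⟩
    have hexp : jacobiTheta₂_term (P + Q) ((x + y) / 2) (T / 4)
        * jacobiTheta₂_term (P - Q) ((x - y) / 2) (T / 4)
        = jacobiTheta₂_term P (2 * x / 2) (2 * T / 4)
          * jacobiTheta₂_term Q (2 * y / 2) (2 * T / 4) := by
      simp only [jacobiTheta₂_term, ← Complex.exp_add]
      congr 1; push_cast; ring
    have hweight : w1 (P + Q) * w2 (P - Q) = w1 P * w4 Q + w4 P * w1 Q := by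
      unfold w1 w2 w4
      by_cases hP : Even P <;> by_cases hQ : Even Q <;>
        simp [hP, hQ, Int.even_add, Int.even_sub, zpow_add₀]
    simp only [Ft, pow_zero, mul_one]
    linear_combination (w1 (P + Q) * w2 (P - Q)) * hexp + (jacobiTheta₂_term P (2 * x / 2) (2 * T / 4)
          * jacobiTheta₂_term Q (2 * y / 2) (2 * T / 4)) * hweight
  · rintro ⟨m, n⟩ hmn
    by_contra h
    apply hmn
    by_cases hm : Even m
    · simp [Ft, w1, hm]
    by_cases hn : Even n
    · simp [Ft, w2, hn]
    exfalso; apply h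
    obtain ⟨a, rfl⟩ := Int.not_even_iff_odd.mp hm
    obtain ⟨b, rfl⟩ := Int.not_even_iff_odd.mp hn
    refine ⟨(a + b + 1, a - b), ?_⟩
    simp only [Prod.mk.injEq]
    constructor <;> ring

/-! ### Logarithmic derivatives -/

noncomputable def rr (w : ℤ → ℂ) (k : ℕ) (u τ : ℂ) : ℂ := W w k u τ / W w 0 u τ

noncomputable def L1 (w : ℤ → ℂ) (u τ : ℂ) : ℂ := rr w 1 u τ
noncomputable def L2 (w : ℤ → ℂ) (u τ : ℂ) : ℂ := rr w 2 u τ - rr w 1 u τ ^ 2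
noncomputable def L3 (w : ℤ → ℂ) (u τ : ℂ) : ℂ :=
  rr w 3 u τ - 3 * rr w 1 u τ * rr w 2 u τ + 2 * rr w 1 u τ ^ 3
noncomputable def L4 (w : ℤ → ℂ) (u τ : ℂ) : ℂ :=
  rr w 4 u τ - 4 * rr w 1 u τ * rr w 3 u τ - 3 * rr w 2 u τ ^ 2
    + 12 * rr w 1 u τ ^ 2 * rr w 2 u τ - 6 * rr w 1 u τ ^ 4

lemma rr_hasDerivAt {w : ℤ → ℂ} (hw : ∀ m, ‖w m‖ ≤ 1) (k : ℕ) {u τ : ℂ} (hτ : 0 < τ.im)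
    (h0 : W w 0 u τ ≠ 0) :
    HasDerivAt (fun v => rr w k v τ) (rr w (k+1) u τ - rr w k u τ * rr w 1 u τ) u := by
  have := (W_hasDerivAt hw k u hτ).fun_div (W_hasDerivAt hw 0 u hτ) h0
  refine this.congr_deriv ?_
  unfold rr
  field_simp

lemma L1_hasDerivAt {w : ℤ → ℂ} (hw : ∀ m, ‖w m‖ ≤ 1) {u τ : ℂ} (hτ : 0 < τ.im)
    (h0 : W w 0 u τ ≠ 0) : HasDerivAt (fun v => L1 w v τ) (L2 w u τ) u := by
  have := rr_hasDerivAt hw 1 hτ h0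
  refine this.congr_deriv ?_
  unfold L2; ring

lemma L2_hasDerivAt {w : ℤ → ℂ} (hw : ∀ m, ‖w m‖ ≤ 1) {u τ : ℂ} (hτ : 0 < τ.im)
    (h0 : W w 0 u τ ≠ 0) : HasDerivAt (fun v => L2 w v τ) (L3 w u τ) u := by
  have r1 := rr_hasDerivAt hw 1 hτ h0
  have r2 := rr_hasDerivAt hw 2 hτ h0
  refine (r2.fun_sub (r1.fun_pow 2)).congr_deriv ?_
  unfold L3; push_cast; ring

lemma L3_hasDerivAt {w : ℤ → ℂ} (hw : ∀ m, ‖w m‖ ≤ 1) {u τ : ℂ} (hτ : 0 < τ.im)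
    (h0 : W w 0 u τ ≠ 0) : HasDerivAt (fun v => L3 w v τ) (L4 w u τ) u := by
  have r1 := rr_hasDerivAt hw 1 hτ h0
  have r2 := rr_hasDerivAt hw 2 hτ h0
  have r3 := rr_hasDerivAt hw 3 hτ h0
  refine ((r3.fun_sub ((r1.const_mul 3).fun_mul r2)).fun_add
    ((r1.fun_pow 3).const_mul 2)).congr_deriv ?_
  unfold L4; push_cast; ring

noncomputable def f0 (u τ : ℂ) : ℂ := L1 w1 u τ - L1 w4 u τ
noncomputable def f1 (u τ : ℂ) : ℂ := L2 w1 u τ - L2 w4 u τ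
noncomputable def f2 (u τ : ℂ) : ℂ := L3 w1 u τ - L3 w4 u τ
noncomputable def f3 (u τ : ℂ) : ℂ := L4 w1 u τ - L4 w4 u τ
noncomputable def Z0 (u τ : ℂ) : ℂ := L1 w1 u τ + L1 w4 u τ
noncomputable def Z1 (u τ : ℂ) : ℂ := L2 w1 u τ + L2 w4 u τ
noncomputable def Z2 (u τ : ℂ) : ℂ := L3 w1 u τ + L3 w4 u τ

def Good (u τ : ℂ) : Prop := W w1 0 u τ ≠ 0 ∧ W w4 0 u τ ≠ 0

lemma Good.eventually {u τ : ℂ} (hτ : 0 < τ.im) (h : Good u τ) :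
    ∀ᶠ v in nhds u, Good v τ :=
  ((W_hasDerivAt hw1 0 u hτ).continuousAt.eventually_ne h.1).and
    ((W_hasDerivAt hw4 0 u hτ).continuousAt.eventually_ne h.2)

section
variable {u τ : ℂ}
lemma f0_d (hτ : 0 < τ.im) (h : Good u τ) : HasDerivAt (fun v => f0 v τ) (f1 u τ) u :=
  (L1_hasDerivAt hw1 hτ h.1).fun_sub (L1_hasDerivAt hw4 hτ h.2)
lemma f1_d (hτ : 0 < τ.im) (h : Good u τ) : HasDerivAt (fun v => f1 v τ) (f2 u τ) u :=
  (L2_hasDerivAt hw1 hτ h.1).fun_sub (L2_hasDerivAt hw4 hτ h.2)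
lemma f2_d (hτ : 0 < τ.im) (h : Good u τ) : HasDerivAt (fun v => f2 v τ) (f3 u τ) u :=
  (L3_hasDerivAt hw1 hτ h.1).fun_sub (L3_hasDerivAt hw4 hτ h.2)
lemma Z0_d (hτ : 0 < τ.im) (h : Good u τ) : HasDerivAt (fun v => Z0 v τ) (Z1 u τ) u :=
  (L1_hasDerivAt hw1 hτ h.1).fun_add (L1_hasDerivAt hw4 hτ h.2)
lemma Z1_d (hτ : 0 < τ.im) (h : Good u τ) : HasDerivAt (fun v => Z1 v τ) (Z2 u τ) u :=
  (L2_hasDerivAt hw1 hτ h.1).fun_add (L2_hasDerivAt hw4 hτ h.2)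
end

lemma rr_neg {w : ℤ → ℂ} {e : ℂ} (he : ∀ m, w (-m) = e * w m) (he0 : e ≠ 0) (k : ℕ) (u τ : ℂ) :
    rr w k (-u) τ = (-1) ^ k * rr w k u τ := by
  unfold rr
  rw [W_neg he, W_neg he, pow_zero, mul_one, mul_assoc, mul_div_mul_left _ _ he0, mul_div_assoc]

lemma rr1_neg (k : ℕ) (u τ : ℂ) : rr w1 k (-u) τ = (-1) ^ k * rr w1 k u τ :=
  rr_neg w1_neg (by norm_num) k u τ
lemma rr4_neg (k : ℕ) (u τ : ℂ) : rr w4 k (-u) τ = (-1) ^ k * rr w4 k u τ :=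
  rr_neg w4_neg (by norm_num) k u τ

lemma f1_neg (u τ : ℂ) : f1 (-u) τ = f1 u τ := by
  simp only [f1, L2, rr1_neg, rr4_neg]; ring
lemma Z1_neg (u τ : ℂ) : Z1 (-u) τ = Z1 u τ := by
  simp only [Z1, L2, rr1_neg, rr4_neg]; ring
lemma Z0_neg (u τ : ℂ) : Z0 (-u) τ = -Z0 u τ := by
  simp only [Z0, L1, rr1_neg, rr4_neg]; ring

/-! ### Addition formulas -/

section
variable {T : ℂ}

lemma add_E1 (hT : 0 < T.im) (u : ℂ) :
    W w1 0 u T * W w2 0 0 T = 2 * (W w1 0 u (2*T) * W w4 0 u (2*T)) := by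
  have := W_bilinear (u/2) (u/2) hT
  rw [add_halves, sub_self, mul_div_cancel₀ u two_ne_zero] at this
  rw [this]; ring

lemma im2 (hT : 0 < T.im) : 0 < (2 * T).im := by simpa using hT

lemma add_E1' (hT : 0 < T.im) (u : ℂ) :
    W w1 1 u T * W w2 0 0 T = 2 * (W w1 1 u (2*T) * W w4 0 u (2*T)
      + W w1 0 u (2*T) * W w4 1 u (2*T)) := by
  have h1 := (W_hasDerivAt hw1 0 u hT).mul_const (W w2 0 0 T)
  have h2 := ((W_hasDerivAt hw1 0 u (im2 hT)).fun_mul (W_hasDerivAt hw4 0 u (im2 hT))).const_mul 2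
  rw [funext (add_E1 hT)] at h1
  exact h1.unique h2

lemma W10 : W w1 0 0 T = 0 := by
  have := W_neg w1_neg 0 0 T
  simp at this
  linear_combination this / 2

lemma add_E2 (hT : 0 < T.im) (u : ℂ) :
    W w1 1 0 T * W w2 0 u T = 2 * (W w1 1 u (2*T) * W w4 0 u (2*T)
      - W w1 0 u (2*T) * W w4 1 u (2*T)) := by
  have key : ∀ p, W w1 0 ((p - u)/2) T * W w2 0 ((p + u)/2) T
      = W w1 0 p (2*T) * W w4 0 u (2*T) - W w4 0 p (2*T) * W w1 0 u (2*T) := by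
    intro p
    have := W_bilinear (p/2) (-u/2) hT
    rw [show p/2 + -u/2 = (p-u)/2 by ring, show p/2 - -u/2 = (p+u)/2 by ring,
      show 2 * (p/2) = p by ring, show 2*(-u/2) = -u by ring, W_neg w1_neg, W_neg w4_neg] at this
    rw [this]; ring
  have e1 : HasDerivAt (fun p : ℂ => (p - u)/2) (1/2) u := ((hasDerivAt_id u).sub_const u).div_const 2
  have e2 : HasDerivAt (fun p : ℂ => (p + u)/2) (1/2) u := ((hasDerivAt_id u).add_const u).div_const 2
  have h1 := (((W_hasDerivAt hw1 0 ((u-u)/2) hT).comp u e1).fun_mul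
    ((W_hasDerivAt hw2 0 ((u+u)/2) hT).comp u e2))
  have h2 := ((W_hasDerivAt hw1 0 u (im2 hT)).mul_const (W w4 0 u (2*T))).fun_sub
    ((W_hasDerivAt hw4 0 u (im2 hT)).mul_const (W w1 0 u (2*T)))
  simp only [Function.comp_def] at h1
  rw [funext key] at h1
  have := h1.unique h2
  rw [show (u - u)/2 = 0 by ring, show (u+u)/2 = u by ring, W10] at this
  linear_combination 2 * this

lemma add_E2' (hT : 0 < T.im) (u : ℂ) :
    W w1 1 0 T * W w2 1 u T = 2 * (W w1 2 u (2*T) * W w4 0 u (2*T)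
      - W w1 0 u (2*T) * W w4 2 u (2*T)) := by
  have h1 := (W_hasDerivAt hw2 0 u hT).const_mul (W w1 1 0 T)
  have h2 := (((W_hasDerivAt hw1 1 u (im2 hT)).fun_mul (W_hasDerivAt hw4 0 u (im2 hT))).fun_sub
    ((W_hasDerivAt hw1 0 u (im2 hT)).fun_mul (W_hasDerivAt hw4 1 u (im2 hT)))).const_mul 2
  rw [funext (add_E2 hT)] at h1
  have := h1.unique h2
  rw [this]; ring

lemma add_E3 (hT : 0 < T.im) (x y e : ℂ) :
    W w1 0 (x + e) T * W w2 0 (x + y - e) T * W w1 0 (y + e) T * W w2 0 e T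
      - W w1 0 (x - e) T * W w2 0 (x + y + e) T * W w1 0 (y - e) T * W w2 0 e T
      = W w1 0 (x + y) T * W w2 0 x T * W w1 0 (2 * e) T * W w2 0 y T := by
  have b1 := W_bilinear (x + y/2) (e - y/2) hT
  have b2 := W_bilinear (e + y/2) (y/2) hT
  have b3 := W_bilinear (x + y/2) (-(e + y/2)) hT
  have b4 := W_bilinear (-(e - y/2)) (y/2) hT
  have b5 := W_bilinear (x + y/2) (y/2) hT
  have b6 := W_bilinear (e + y/2) (e - y/2) hT
  have n1 : ∀ v τ, W w1 0 (2 * -v) τ = - W w1 0 (2 * v) τ := fun v τ => by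
    rw [mul_neg, W_neg w1_neg]; ring
  have n4 : ∀ v τ, W w4 0 (2 * -v) τ = W w4 0 (2 * v) τ := fun v τ => by
    rw [mul_neg, W_neg w4_neg]; ring
  have n2 : W w2 0 (-e) T = W w2 0 e T := by rw [W_neg w2_neg]; ring
  rw [show x + y/2 + (e - y/2) = x + e by ring, show x + y/2 - (e - y/2) = x + y - e by ring] at b1
  rw [show e + y/2 + y/2 = y + e by ring, show e + y/2 - y/2 = e by ring] at b2
  rw [show x + y/2 + -(e + y/2) = x - e by ring, show x + y/2 - -(e + y/2) = x + y + e by ring,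
    n1, n4] at b3
  rw [show -(e - y/2) + y/2 = y - e by ring, show -(e - y/2) - y/2 = -e by ring, n2, n1, n4] at b4
  rw [show x + y/2 + y/2 = x + y by ring, show x + y/2 - y/2 = x by ring] at b5
  rw [show e + y/2 + (e - y/2) = 2 * e by ring, show e + y/2 - (e - y/2) = y by ring] at b6
  have c1 := congrArg₂ (· * ·) b1 b2
  have c2 := congrArg₂ (· * ·) b3 b4
  have c3 := congrArg₂ (· * ·) b5 b6
  linear_combination c1 - c2 - c3

lemma add_E3' (hT : 0 < T.im) (x y : ℂ) :
    (W w1 1 x T * W w2 0 (x + y) T * W w1 0 y T - W w1 0 x T * W w2 1 (x + y) T * W w1 0 y T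
      + W w1 0 x T * W w2 0 (x + y) T * W w1 1 y T) * W w2 0 0 T
      = W w1 0 (x + y) T * W w2 0 x T * W w1 1 0 T * W w2 0 y T := by
  have p (c : ℂ) : HasDerivAt (fun e : ℂ => c + e) 1 0 := (hasDerivAt_id (0:ℂ)).const_add c
  have m (c : ℂ) : HasDerivAt (fun e : ℂ => c - e) (-1) 0 := (hasDerivAt_id (0:ℂ)).const_sub c
  have d : HasDerivAt (fun e : ℂ => 2 * e) (2 * 1) 0 := (hasDerivAt_id (0:ℂ)).const_mul 2
  have D := W_hasDerivAt hw2 0 0 hT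
  have h1 := (((((W_hasDerivAt hw1 0 (x+0) hT).comp 0 (p x)).fun_mul
    ((W_hasDerivAt hw2 0 (x+y-0) hT).comp 0 (m (x+y)))).fun_mul
    ((W_hasDerivAt hw1 0 (y+0) hT).comp 0 (p y))).fun_mul D).fun_sub
    (((((W_hasDerivAt hw1 0 (x-0) hT).comp 0 (m x)).fun_mul
    ((W_hasDerivAt hw2 0 (x+y+0) hT).comp 0 (p (x+y)))).fun_mul
    ((W_hasDerivAt hw1 0 (y-0) hT).comp 0 (m y))).fun_mul D)
  have h2 := ((((W_hasDerivAt hw1 0 (2*0) hT).comp 0 d).const_mul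
    (W w1 0 (x + y) T * W w2 0 x T)).mul_const (W w2 0 y T))
  simp only [Function.comp_def] at h1 h2
  rw [funext (add_E3 hT x y)] at h1
  have := h1.unique h2
  simp only [mul_zero, add_zero, sub_zero, zero_add] at this
  linear_combination this / 2

lemma W1_ne (hT : 0 < T.im) {u : ℂ} (h : Good u (2*T)) :
    W w1 0 u T ≠ 0 ∧ W w2 0 0 T ≠ 0 := by
  have := add_E1 hT u
  have h2 : W w1 0 u T * W w2 0 0 T ≠ 0 := by
    rw [this]; exact mul_ne_zero two_ne_zero (mul_ne_zero h.1 h.2)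
  exact mul_ne_zero_iff.mp h2

lemma f0_eq (hT : 0 < T.im) {u : ℂ} (h : Good u (2*T)) :
    f0 u (2*T) = W w1 1 0 T * W w2 0 u T / (W w1 0 u T * W w2 0 0 T) := by
  obtain ⟨h1, h2⟩ := h
  rw [add_E1 hT, add_E2 hT, f0, L1, L1, rr, rr]
  field_simp

lemma f1_eq (hT : 0 < T.im) {u : ℂ} (h : Good u (2*T)) :
    f1 u (2*T) + f0 u (2*T) * Z0 u (2*T)
      = W w1 1 0 T * W w2 1 u T / (W w1 0 u T * W w2 0 0 T) := by
  obtain ⟨h1, h2⟩ := h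
  rw [add_E1 hT, add_E2' hT, f0, Z0, f1, L1, L1, L2, L2, rr, rr, rr, rr]
  field_simp
  ring

lemma Z0_eq (hT : 0 < T.im) {u : ℂ} (h : Good u (2*T)) :
    Z0 u (2*T) = W w1 1 u T / W w1 0 u T := by
  have h3 := W1_ne hT h
  obtain ⟨h1, h2⟩ := h
  rw [← mul_div_mul_right _ _ h3.2, add_E1 hT, add_E1' hT, Z0, L1, L1, rr, rr]
  field_simp

lemma add_F (hT : 0 < T.im) {x y : ℂ} (hx : Good x (2*T)) (hy : Good y (2*T))
    (hb : Good (x + y) (2*T)) :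
    f0 x (2*T) * f0 y (2*T)
      = f0 (x+y) (2*T) * (Z0 x (2*T) + Z0 y (2*T) - Z0 (x+y) (2*T)) - f1 (x+y) (2*T) := by
  have e := f1_eq hT hb
  have k := add_E3' hT x y
  obtain ⟨ax, g⟩ := W1_ne hT hx
  obtain ⟨ay, -⟩ := W1_ne hT hy
  obtain ⟨ab, -⟩ := W1_ne hT hb
  have e2 : f0 x (2*T) * f0 y (2*T)
      = f0 (x+y) (2*T) * (Z0 x (2*T) + Z0 y (2*T))
        - W w1 1 0 T * W w2 1 (x+y) T / (W w1 0 (x+y) T * W w2 0 0 T) := by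
    rw [f0_eq hT hx, f0_eq hT hy, f0_eq hT hb, Z0_eq hT hx, Z0_eq hT hy]
    field_simp
    linear_combination (-W w1 1 0 T) * k
  linear_combination e2 + e

end

lemma add_F' {τ : ℂ} (hτ : 0 < τ.im) {x y : ℂ} (hx : Good x τ) (hy : Good y τ)
    (hb : Good (x + y) τ) :
    f0 x τ * f0 y τ = f0 (x+y) τ * (Z0 x τ + Z0 y τ - Z0 (x+y) τ) - f1 (x+y) τ := by
  have hT : 0 < (τ/2).im := by rw [im_div2]; positivity
  have h := @add_F (τ/2) hT x y
  rw [mul_div_cancel₀ τ two_ne_zero] at h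
  exact h hx hy hb

lemma add_I1 {τ : ℂ} (hτ : 0 < τ.im) {x y : ℂ} (hx : Good x τ) (hy : Good y τ)
    (hb : Good (x + y) τ) :
    f0 x τ * f1 y τ = f1 (x+y) τ * (Z0 x τ + Z0 y τ - Z0 (x+y) τ)
      + f0 (x+y) τ * (Z1 y τ - Z1 (x+y) τ) - f2 (x+y) τ := by
  have e : HasDerivAt (fun y : ℂ => x + y) 1 y := (hasDerivAt_id y).const_add x
  have h1 := (f0_d hτ hy).const_mul (f0 x τ)
  have h2 := (((f0_d hτ hb).comp y e).fun_mul ((((Z0_d hτ hy).const_add (Z0 x τ)).fun_sub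
    ((Z0_d hτ hb).comp y e)))).fun_sub ((f1_d hτ hb).comp y e)
  simp only [Function.comp_def] at h2
  have hev : (fun y => f0 x τ * f0 y τ) =ᶠ[nhds y]
      (fun y => f0 (x+y) τ * (Z0 x τ + Z0 y τ - Z0 (x+y) τ) - f1 (x+y) τ) := by
    filter_upwards [hy.eventually hτ, e.continuousAt.eventually (hb.eventually hτ)] with z hz1 hz2
    exact add_F' hτ hx hz1 hz2
  have := h1.unique (h2.congr_of_eventuallyEq hev)
  linear_combination this

lemma add_I2 {τ : ℂ} (hτ : 0 < τ.im) {x y : ℂ} (hx : Good x τ) (hy : Good y τ)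
    (hb : Good (x + y) τ) :
    f1 x τ * f1 y τ = f2 (x+y) τ * (Z0 x τ + Z0 y τ - Z0 (x+y) τ)
      + f1 (x+y) τ * (Z1 x τ + Z1 y τ - 2 * Z1 (x+y) τ)
      - f0 (x+y) τ * Z2 (x+y) τ - f3 (x+y) τ := by
  have e : HasDerivAt (fun x : ℂ => x + y) 1 x := (hasDerivAt_id x).add_const y
  have h1 := (f0_d hτ hx).mul_const (f1 y τ)
  have h2 := ((((f1_d hτ hb).comp x e).fun_mul ((((Z0_d hτ hx).add_const (Z0 y τ)).fun_sub
    ((Z0_d hτ hb).comp x e)))).fun_add (((f0_d hτ hb).comp x e).fun_mul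
      (((Z1_d hτ hb).comp x e).const_sub (Z1 y τ)))).fun_sub ((f2_d hτ hb).comp x e)
  simp only [Function.comp_def] at h2
  have hev : (fun x => f0 x τ * f1 y τ) =ᶠ[nhds x]
      (fun x => f1 (x+y) τ * (Z0 x τ + Z0 y τ - Z0 (x+y) τ)
      + f0 (x+y) τ * (Z1 y τ - Z1 (x+y) τ) - f2 (x+y) τ) := by
    filter_upwards [hx.eventually hτ, e.continuousAt.eventually (hb.eventually hτ)] with z hz1 hz2
    exact add_I1 hτ hz1 hy hz2
  have := h1.unique (h2.congr_of_eventuallyEq hev)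
  linear_combination this

/-! ### Translating the frozen definitions -/

lemma zeta1_eq (u : ℂ) {τ : ℂ} (hτ : 0 < τ.im) : zeta1 u τ = L1 w1 u τ := by
  unfold zeta1 L1 rr
  simp only [theta1_eq]
  rw [(W_hasDerivAt hw1 0 u hτ).deriv]

lemma zeta4_eq (u : ℂ) {τ : ℂ} (hτ : 0 < τ.im) : zeta4 u τ = L1 w4 u τ := by
  unfold zeta4 L1 rr
  simp only [theta4_eq]
  rw [(W_hasDerivAt hw4 0 u hτ).deriv]

lemma Sp_eq (u : ℂ) {τ : ℂ} (hτ : 0 < τ.im) : Sp u τ = f0 u τ := by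
  rw [Sp, zeta1_eq u hτ, zeta4_eq u hτ, f0]

lemma Spp_eq {u τ : ℂ} (hτ : 0 < τ.im) (h : Good u τ) : Spp u τ = f1 u τ := by
  rw [Spp, funext (fun v => Sp_eq v hτ), (f0_d hτ h).deriv]

lemma zeta1_half {u τ : ℂ} (hτ : 0 < τ.im) (h : Good u τ) : zeta1 u (τ/2) = Z0 u τ := by
  have hT : 0 < (τ/2).im := by rw [im_div2]; positivity
  have h' := @Z0_eq (τ/2) hT u
  rw [mul_div_cancel₀ τ two_ne_zero] at h'
  rw [h' h, zeta1_eq u hT, L1, rr]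

lemma wp1_half {u τ : ℂ} (hτ : 0 < τ.im) (h : Good u τ) : wp1 u (τ/2) = -Z1 u τ := by
  have hev : (fun v => zeta1 v (τ/2)) =ᶠ[nhds u] (fun v => Z0 v τ) := by
    filter_upwards [h.eventually hτ] with v hv using zeta1_half hτ hv
  rw [wp1, hev.deriv_eq, (Z0_d hτ h).deriv]

/-! ### Directional derivatives -/

section
variable {E : Type*} [NormedAddCommGroup E] [NormedSpace ℝ E]

def PD (e : E) (f : E → ℂ) (x : E) (v : ℂ) : Prop :=
  ∃ L : E →L[ℝ] ℂ, HasFDerivAt f L x ∧ L e = v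

variable {e : E} {f g : E → ℂ} {x : E} {v v' : ℂ}

lemma PD.mul (hf : PD e f x v) (hg : PD e g x v') :
    PD e (fun y => f y * g y) x (v * g x + f x * v') := by
  obtain ⟨L, h1, rfl⟩ := hf
  obtain ⟨M, h2, rfl⟩ := hg
  refine ⟨_, h1.fun_mul h2, ?_⟩
  simp; ring

lemma PD.sub (hf : PD e f x v) (hg : PD e g x v') :
    PD e (fun y => f y - g y) x (v - v') := by
  obtain ⟨L, h1, rfl⟩ := hf
  obtain ⟨M, h2, rfl⟩ := hg
  refine ⟨_, h1.fun_sub h2, ?_⟩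
  simp

lemma PD.const_mul (c : ℂ) (hf : PD e f x v) :
    PD e (fun y => c * f y) x (c * v) := by
  obtain ⟨L, h1, rfl⟩ := hf
  refine ⟨_, h1.const_mul c, ?_⟩
  simp

lemma PD.inv (hf : PD e f x v) (h0 : f x ≠ 0) :
    PD e (fun y => (f y)⁻¹) x (-v / f x ^ 2) := by
  obtain ⟨L, h1, rfl⟩ := hf
  refine ⟨_, ((hasDerivAt_inv h0).hasFDerivAt.restrictScalars ℝ).comp x h1, ?_⟩
  simp
  ring

lemma PD.div (hf : PD e f x v) (hg : PD e g x v') (h0 : g x ≠ 0) :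
    PD e (fun y => f y / g y) x ((v * g x - f x * v') / g x ^ 2) := by
  have := hf.mul (hg.inv h0)
  simp only [div_eq_mul_inv] at this ⊢
  convert this using 1
  field_simp
  ring

lemma PD.congr (hf : PD e f x v) (h : g =ᶠ[nhds x] f) : PD e g x v := by
  obtain ⟨L, h1, h2⟩ := hf
  exact ⟨L, h1.congr_of_eventuallyEq h, h2⟩

lemma PD.val (hf : PD e f x v) (h : v = v') : PD e f x v' := h ▸ hf

variable {u τ : E → ℂ} {u' τ' : ℂ}

lemma PD.W {w : ℤ → ℂ} (hw : ∀ m, ‖w m‖ ≤ 1) (k : ℕ) (hu : PD e u x u') (ht : PD e τ x τ')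
    (hτ : 0 < (τ x).im) :
    PD e (fun y => W w k (u y) (τ y)) x
      (_root_.W w (k+1) (u x) (τ x) * u' + kap * _root_.W w (k+2) (u x) (τ x) * τ') := by
  obtain ⟨L, h1, rfl⟩ := hu
  obtain ⟨M, h2, rfl⟩ := ht
  have h3 := (W_hasFDerivAt hw k (u x) hτ).restrictScalars ℝ
  refine ⟨_, HasFDerivAt.comp (g := fun p : ℂ × ℂ => _root_.W w k p.1 p.2)
    (f := fun y => (u y, τ y)) x h3 (h1.prodMk h2), ?_⟩
  simp

lemma PD.rr {w : ℤ → ℂ} (hw : ∀ m, ‖w m‖ ≤ 1) (k : ℕ) (hu : PD e u x u') (ht : PD e τ x τ')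
    (hτ : 0 < (τ x).im) (h0 : _root_.W w 0 (u x) (τ x) ≠ 0) :
    PD e (fun y => rr w k (u y) (τ y)) x
      ((_root_.rr w (k+1) (u x) (τ x) - _root_.rr w k (u x) (τ x) * _root_.rr w 1 (u x) (τ x)) * u'
       + kap * (_root_.rr w (k+2) (u x) (τ x)
          - _root_.rr w k (u x) (τ x) * _root_.rr w 2 (u x) (τ x)) * τ') := by
  refine ((PD.W hw k hu ht hτ).div (PD.W hw 0 hu ht hτ) h0).val ?_
  unfold _root_.rr
  field_simp
  ring

lemma PD.L1 {w : ℤ → ℂ} (hw : ∀ m, ‖w m‖ ≤ 1) (hu : PD e u x u') (ht : PD e τ x τ')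
    (hτ : 0 < (τ x).im) (h0 : _root_.W w 0 (u x) (τ x) ≠ 0) :
    PD e (fun y => L1 w (u y) (τ y)) x
      (L2 w (u x) (τ x) * u' + kap * (L3 w (u x) (τ x)
        + 2 * _root_.L1 w (u x) (τ x) * L2 w (u x) (τ x)) * τ') := by
  refine (PD.rr hw 1 hu ht hτ h0).val ?_
  unfold L3 L2 _root_.L1
  ring

lemma PD.L2 {w : ℤ → ℂ} (hw : ∀ m, ‖w m‖ ≤ 1) (hu : PD e u x u') (ht : PD e τ x τ')
    (hτ : 0 < (τ x).im) (h0 : _root_.W w 0 (u x) (τ x) ≠ 0) :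
    PD e (fun y => L2 w (u y) (τ y)) x
      (L3 w (u x) (τ x) * u' + kap * (L4 w (u x) (τ x)
        + 2 * _root_.L2 w (u x) (τ x) ^ 2
        + 2 * _root_.L1 w (u x) (τ x) * L3 w (u x) (τ x)) * τ') := by
  have r1 := PD.rr hw 1 hu ht hτ h0
  have r2 := PD.rr hw 2 hu ht hτ h0
  have := r2.sub (r1.mul r1)
  simp only [← pow_two] at this
  refine this.val ?_
  unfold L4 L3 _root_.L2 _root_.L1
  ring

lemma PD.f0 (hu : PD e u x u') (ht : PD e τ x τ')
    (hτ : 0 < (τ x).im) (h0 : Good (u x) (τ x)) :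
    PD e (fun y => f0 (u y) (τ y)) x
      (f1 (u x) (τ x) * u' + kap * (f2 (u x) (τ x) + f1 (u x) (τ x) * Z0 (u x) (τ x)
        + _root_.f0 (u x) (τ x) * Z1 (u x) (τ x)) * τ') := by
  refine ((PD.L1 hw1 hu ht hτ h0.1).sub (PD.L1 hw4 hu ht hτ h0.2)).val ?_
  unfold f2 f1 _root_.f0 Z0 Z1
  ring

lemma PD.f1 (hu : PD e u x u') (ht : PD e τ x τ')
    (hτ : 0 < (τ x).im) (h0 : Good (u x) (τ x)) :
    PD e (fun y => f1 (u y) (τ y)) x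
      (f2 (u x) (τ x) * u' + kap * (f3 (u x) (τ x) + f2 (u x) (τ x) * Z0 (u x) (τ x)
        + 2 * _root_.f1 (u x) (τ x) * Z1 (u x) (τ x)
        + _root_.f0 (u x) (τ x) * Z2 (u x) (τ x)) * τ') := by
  refine ((PD.L2 hw1 hu ht hτ h0.1).sub (PD.L2 hw4 hu ht hτ h0.2)).val ?_
  unfold f3 f2 _root_.f1 _root_.f0 Z0 Z1 Z2
  ring

end

lemma PD.of_diff {N : ℕ} {k : Fin N} {f : (Fin N → ℝ) → ℂ} {x : Fin N → ℝ}
    (h : DifferentiableAt ℝ f x) : PD (Pi.single k 1) f x (pdC k f x) :=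
  ⟨_, h.hasFDerivAt, rfl⟩

lemma PD.pdC_eq {N : ℕ} {k : Fin N} {f : (Fin N → ℝ) → ℂ} {x : Fin N → ℝ} {v : ℂ}
    (h : PD (Pi.single k 1) f x v) : pdC k f x = v := by
  obtain ⟨L, h1, rfl⟩ := h
  rw [pdC, h1.fderiv]

/-- Tsarev compatibility of the system for R_i (Proposition, part (i), identity (c101)):
under the elliptic Gibbons–Tsarev system, ∂Γ_{ij}/∂λ_k = Γ_{ij}Γ_{jk} + Γ_{ik}Γ_{kj} − Γ_{ik}Γ_{ij},
and in particular ∂Γ_{ij}/∂λ_k = ∂Γ_{ik}/∂λ_j. -/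
theorem tsarev_compatibility
    (N : ℕ) (U : Set (Fin N → ℝ)) (hU : IsOpen U)
    (ξ : Fin N → (Fin N → ℝ) → ℂ) (τ : (Fin N → ℝ) → ℂ)
    (hξC2 : ∀ i, ContDiffOn ℝ 2 (ξ i) U)
    (hτC2 : ContDiffOn ℝ 2 τ U)
    (hup : ∀ x ∈ U, 0 < (τ x).im)
    -- the elliptic Gibbons–Tsarev system
    (hGT1 : ∀ j k : Fin N, j ≠ k → ∀ x ∈ U,
      pdC j (ξ k) x = 1 / (4 * (Real.pi : ℂ) * Complex.I)
        * (zeta1 (ξ j x - ξ k x) (τ x / 2) - zeta1 (ξ j x) (τ x / 2)) * pdC j τ x)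
    (hGT2 : ∀ j k : Fin N, j ≠ k → ∀ x ∈ U,
      pdC k (pdC j τ) x = 1 / (2 * (Real.pi : ℂ) * Complex.I)
        * wp1 (ξ k x - ξ j x) (τ x / 2) * pdC k τ x * pdC j τ x)
    -- nonvanishing of the theta-function values appearing in denominators
    (hnz1 : ∀ i, ∀ x ∈ U, theta1 (ξ i x) (τ x) ≠ 0)
    (hnz2 : ∀ i, ∀ x ∈ U, theta4 (ξ i x) (τ x) ≠ 0)
    (hnz3 : ∀ i, ∀ x ∈ U, theta1 (ξ i x) (τ x / 2) ≠ 0)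
    (hnz4 : ∀ i j : Fin N, i ≠ j → ∀ x ∈ U, theta1 (ξ i x - ξ j x) (τ x) ≠ 0)
    (hnz5 : ∀ i j : Fin N, i ≠ j → ∀ x ∈ U, theta4 (ξ i x - ξ j x) (τ x) ≠ 0)
    (hnz6 : ∀ i j : Fin N, i ≠ j → ∀ x ∈ U, theta1 (ξ i x - ξ j x) (τ x / 2) ≠ 0)
    (hnzS : ∀ i, ∀ x ∈ U, Sp (ξ i x) (τ x) ≠ 0) :
    ∀ i j k : Fin N, i ≠ j → j ≠ k → i ≠ k → ∀ x ∈ U,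
      pdC k (Gam ξ τ i j) x
          = Gam ξ τ i j x * Gam ξ τ j k x + Gam ξ τ i k x * Gam ξ τ k j x
            - Gam ξ τ i k x * Gam ξ τ i j x
      ∧ pdC k (Gam ξ τ i j) x = pdC j (Gam ξ τ i k) x := by
  have hkap : kap = 1 / (4 * (Real.pi : ℂ) * Complex.I) := rfl
  have g1 : ∀ i, ∀ x ∈ U, Good (ξ i x) (τ x) := fun i x hx =>
    ⟨by rw [← theta1_eq]; exact hnz1 i x hx, by rw [← theta4_eq]; exact hnz2 i x hx⟩
  have g2 : ∀ i j, i ≠ j → ∀ x ∈ U, Good (ξ i x - ξ j x) (τ x) := fun i j hij x hx =>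
    ⟨by rw [← theta1_eq]; exact hnz4 i j hij x hx, by rw [← theta4_eq]; exact hnz5 i j hij x hx⟩
  have dξ : ∀ i, ∀ x ∈ U, DifferentiableAt ℝ (ξ i) x := fun i x hx =>
    ((hξC2 i).contDiffAt (hU.mem_nhds hx)).differentiableAt (by norm_num)
  have dτ : ∀ x ∈ U, DifferentiableAt ℝ τ x := fun x hx =>
    (hτC2.contDiffAt (hU.mem_nhds hx)).differentiableAt (by norm_num)
  have dτ2 : ∀ j, ∀ x ∈ U, DifferentiableAt ℝ (pdC j τ) x := fun j x hx => by
    have h1 : ContDiffAt ℝ 1 (fderiv ℝ τ) x :=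
      (hτC2.contDiffAt (hU.mem_nhds hx)).fderiv_right (by norm_num)
    exact (h1.differentiableAt (by norm_num)).clm_apply (differentiableAt_const _)
  have gam : ∀ i j, i ≠ j → ∀ x ∈ U, Gam ξ τ i j x
      = -kap * (f0 (ξ j x) (τ x) / f0 (ξ i x) (τ x)) * f1 (ξ i x - ξ j x) (τ x) * pdC j τ x := by
    intro i j hij x hx
    rw [Gam, Sp_eq _ (hup x hx), Sp_eq _ (hup x hx), Spp_eq (hup x hx) (g2 i j hij x hx), hkap]
  have fnz : ∀ i, ∀ x ∈ U, f0 (ξ i x) (τ x) ≠ 0 := fun i x hx => by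
    rw [← Sp_eq _ (hup x hx)]; exact hnzS i x hx
  have main : ∀ i j k : Fin N, i ≠ j → j ≠ k → i ≠ k → ∀ x ∈ U,
      pdC k (Gam ξ τ i j) x
          = Gam ξ τ i j x * Gam ξ τ j k x + Gam ξ τ i k x * Gam ξ τ k j x
            - Gam ξ τ i k x * Gam ξ τ i j x := by
    intro i j k hij hjk hik x hx
    have ht := hup x hx
    have pτ : PD (Pi.single k 1) τ x (pdC k τ x) := PD.of_diff (dτ x hx)
    have pi : PD (Pi.single k 1) (ξ i) x (pdC k (ξ i) x) := PD.of_diff (dξ i x hx)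
    have pj : PD (Pi.single k 1) (ξ j) x (pdC k (ξ j) x) := PD.of_diff (dξ j x hx)
    have pt2 : PD (Pi.single k 1) (pdC j τ) x (pdC k (pdC j τ) x) := PD.of_diff (dτ2 j x hx)
    rw [hGT1 k i hik.symm x hx, ← hkap, zeta1_half ht (g2 k i hik.symm x hx),
      zeta1_half ht (g1 k x hx)] at pi
    rw [hGT1 k j hjk.symm x hx, ← hkap, zeta1_half ht (g2 k j hjk.symm x hx),
      zeta1_half ht (g1 k x hx)] at pj
    rw [hGT2 j k hjk x hx, wp1_half ht (g2 k j hjk.symm x hx),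
      show 1 / (2 * (Real.pi : ℂ) * Complex.I) = 2 * kap by rw [hkap]; field_simp; norm_num] at pt2
    have qj := PD.f0 pj pτ ht (g1 j x hx)
    have qi := PD.f0 pi pτ ht (g1 i x hx)
    have qij := PD.f1 (pi.sub pj) pτ ht (g2 i j hij x hx)
    have tot := ((((qj.div qi (fnz i x hx)).const_mul (-kap)).mul qij).mul pt2)
    have hev : Gam ξ τ i j =ᶠ[nhds x] (fun x => -kap * (f0 (ξ j x) (τ x) / f0 (ξ i x) (τ x))
        * f1 (ξ i x - ξ j x) (τ x) * pdC j τ x) := by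
      filter_upwards [hU.mem_nhds hx] with y hy using gam i j hij y hy
    rw [(tot.congr hev).pdC_eq, gam i j hij x hx, gam j k hjk x hx, gam i k hik x hx,
      gam k j hjk.symm x hx]
    have I1j := add_I1 ht (g1 k x hx) (g2 j k hjk x hx) (by
      rw [add_sub_cancel]; exact g1 j x hx)
    have I1i := add_I1 ht (g1 k x hx) (g2 i k hik x hx) (by
      rw [add_sub_cancel]; exact g1 i x hx)
    have I2 := add_I2 ht (g2 i k hik x hx) (g2 k j hjk.symm x hx) (by
      rw [sub_add_sub_cancel]; exact g2 i j hij x hx)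
    rw [add_sub_cancel] at I1j I1i
    rw [sub_add_sub_cancel] at I2
    have nj : ξ k x - ξ j x = -(ξ j x - ξ k x) := by ring
    have ni : ξ k x - ξ i x = -(ξ i x - ξ k x) := by ring
    rw [nj, f1_neg, Z1_neg, Z0_neg] at I2
    rw [nj, ni, f1_neg, Z1_neg, Z0_neg, Z0_neg]
    have hfi := fnz i x hx
    have hfj := fnz j x hx
    have hfk := fnz k x hx
    generalize f0 (ξ i x) (τ x) = fi at *
    generalize f0 (ξ j x) (τ x) = fj at *
    generalize f0 (ξ k x) (τ x) = fk at *
    clear tot qij qi qj pt2 pi pj pτ hev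
    generalize pdC k τ x = tk at *
    generalize pdC j τ x = tj at *
    generalize f1 (ξ i x - ξ j x) (τ x) = f1ij at *
    generalize f1 (ξ i x - ξ k x) (τ x) = f1ik at *
    generalize f1 (ξ j x - ξ k x) (τ x) = f1jk at *
    field_simp
    linear_combination (kap ^ 2 * tk * tj) * (-fi * f1ij * I1j + fj * f1ij * I1i - fj * fi * I2)
  intro i j k hij hjk hik x hx
  have a := main i j k hij hjk hik x hx
  have b := main i k j hik hjk.symm hij x hx
  refine ⟨a, ?_⟩
  rw [a, b]; ring
end

section
/- The metric is of Egorov type (Proposition of Section 6): Let U ⊆ ℝ^N be open with coordinates λ₁,…,λ_N, and let ξ₁,…,ξ_N, τ : U → ℂ be C² functions with τ taking values in the upper half-plane, satisfying the elliptic Gibbons–Tsarev system, with all theta-function values appearing in denominators nonzero on U. Define g_i := (1/(4πi)) S'(ξ_i,τ)² ∂τ/∂λ_i. Then for all i ≠ k one has ∂g_i/∂λ_k = ∂g_k/∂λ_i on U, and both sides equal −(2/(4πi)²) S'(ξ_i,τ) S'(ξ_k,τ) S''(ξ_i−ξ_k,τ) (∂τ/∂λ_i)(∂τ/∂λ_k).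 -/
open Complex

/-- g_i = (1/(4πi)) S'(ξ_i,τ)² ∂τ/∂λ_i. -/
noncomputable def gMetric {N : ℕ} (ξ : Fin N → (Fin N → ℝ) → ℂ) (τ : (Fin N → ℝ) → ℂ)
    (i : Fin N) (x : Fin N → ℝ) : ℂ :=
  1 / (4 * (Real.pi : ℂ) * Complex.I) * Sp (ξ i x) (τ x) ^ 2 * pdC i τ x


/-! ### The family of theta series -/

/-- Theta series over the integers of parity `e` with polynomial weights. -/
noncomputable def egPhi (m : ℕ) (e : ℤ) (z w : ℂ) : ℂ :=
  ∑' k : ℤ, ((Real.pi : ℂ) * I * ((2 * k + e : ℤ) : ℂ)) ^ m * jacobiTheta₂_term (2 * k + e) z w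

lemma eg_inj (e : ℤ) : Function.Injective (fun k : ℤ => 2 * k + e) := by
  intro a b h
  simp only at h
  omega

lemma eg_bound (m : ℕ) {S T : ℝ} (hT : 0 < T) {z w : ℂ} (hz : |im z| ≤ S) (hw : T ≤ im w) (n : ℤ) :
    ‖((Real.pi : ℂ) * I * (n : ℂ)) ^ m * jacobiTheta₂_term n z w‖
      ≤ Real.pi ^ m * ((|n| ^ m : ℝ) * Real.exp (-Real.pi * (T * n ^ 2 - 2 * S * |n|))) := by
  rw [norm_mul, norm_pow, norm_mul, norm_mul, Complex.norm_I, mul_one, mul_pow,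
    Complex.norm_of_nonneg Real.pi_pos.le, Complex.norm_intCast, mul_assoc]
  have h := norm_jacobiTheta₂_term_le hT hz hw n
  simp only [Int.cast_abs] at h ⊢
  gcongr

lemma eg_sumbound (m : ℕ) (e : ℤ) (S : ℝ) {T : ℝ} (hT : 0 < T) :
    Summable (fun k : ℤ => Real.pi ^ m * ((|(2 * k + e : ℤ)| ^ m : ℝ) *
      Real.exp (-Real.pi * (T * (2 * k + e : ℤ) ^ 2 - 2 * S * |(2 * k + e : ℤ)|)))) :=
  ((summable_pow_mul_jacobiTheta₂_term_bound S hT m).comp_injective (eg_inj e)).mul_left _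

lemma eg_summable_norm (m : ℕ) (e : ℤ) (z : ℂ) {w : ℂ} (hw : 0 < im w) :
    Summable (fun k : ℤ => ‖((Real.pi : ℂ) * I * ((2 * k + e : ℤ) : ℂ)) ^ m *
      jacobiTheta₂_term (2 * k + e) z w‖) :=
  Summable.of_nonneg_of_le (fun _ => norm_nonneg _)
    (fun k => eg_bound m hw le_rfl le_rfl (2 * k + e)) (eg_sumbound m e |im z| hw)

lemma egPhi_hasFDerivAt (m : ℕ) (e : ℤ) (z : ℂ) {w : ℂ} (hw : 0 < im w) :
    HasFDerivAt (fun p : ℂ × ℂ => egPhi m e p.1 p.2)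
      ((2 * egPhi (m+1) e z w) • (ContinuousLinearMap.fst ℂ ℂ ℂ) +
        (1 / ((Real.pi : ℂ) * I) * egPhi (m+2) e z w) • (ContinuousLinearMap.snd ℂ ℂ ℂ)) (z, w) := by
  obtain ⟨T, hT, hw'⟩ := exists_between hw
  obtain ⟨S, hz⟩ := exists_gt |im z|
  let V : Set (ℂ × ℂ) := {u | |im u| < S} ×ˢ {v | T < im v}
  have hVo : IsOpen V := by
    refine ((_root_.continuous_abs.comp continuous_im).isOpen_preimage _ isOpen_Iio).prod ?_
    exact continuous_im.isOpen_preimage _ isOpen_Ioi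
  have hVmem : (z, w) ∈ V := ⟨hz, hw'⟩
  have hVp : IsPreconnected V := by
    refine (Convex.isPreconnected ?_).prod (convex_halfSpace_im_gt T).isPreconnected
    simpa only [abs_lt] using! (convex_halfSpace_im_gt _).inter (convex_halfSpace_im_lt _)
  have hpi : (Real.pi : ℂ) * I ≠ 0 :=
    mul_ne_zero (by exact_mod_cast Real.pi_ne_zero) I_ne_zero
  let F : ℕ → ℤ → ℂ × ℂ → ℂ := fun m k p =>
    ((Real.pi : ℂ) * I * ((2 * k + e : ℤ) : ℂ)) ^ m * jacobiTheta₂_term (2 * k + e) p.1 p.2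
  let f' : ℤ → ℂ × ℂ → ℂ × ℂ →L[ℂ] ℂ := fun k p =>
    (2 * F (m+1) k p) • (ContinuousLinearMap.fst ℂ ℂ ℂ) +
    (1 / ((Real.pi : ℂ) * I) * F (m+2) k p) • (ContinuousLinearMap.snd ℂ ℂ ℂ)
  have hf (k : ℤ) : ∀ p ∈ V, HasFDerivAt (F m k) (f' k p) p := by
    intro p _
    have h := (hasFDerivAt_jacobiTheta₂_term (2 * k + e) p.1 p.2).const_mul
      (((Real.pi : ℂ) * I * ((2 * k + e : ℤ) : ℂ)) ^ m)
    refine h.congr_fderiv ?_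
    ext
    · simp [f', F, jacobiTheta₂_term_fderiv, jacobiTheta₂_term]
      ring
    · simp [f', F, jacobiTheta₂_term_fderiv, jacobiTheta₂_term]
      field_simp
      rw [pow_add, mul_pow _ _ 2, mul_pow _ _ 2, I_sq]
      ring
  let bd : ℕ → ℤ → ℝ := fun m k => Real.pi ^ m * ((|(2 * k + e : ℤ)| ^ m : ℝ) *
      Real.exp (-Real.pi * (T * (2 * k + e : ℤ) ^ 2 - 2 * S * |(2 * k + e : ℤ)|)))
  have hF (m : ℕ) (k : ℤ) (p) (hp : p ∈ V) : ‖F m k p‖ ≤ bd m k :=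
    eg_bound m hT (le_of_lt hp.1) (le_of_lt hp.2) (2 * k + e)
  let u : ℤ → ℝ := fun k => 2 * bd (m+1) k + ‖1 / ((Real.pi : ℂ) * I)‖ * bd (m+2) k
  have hu : ∀ (k : ℤ), ∀ x ∈ V, ‖f' k x‖ ≤ u k := by
    intro k p hp
    have hns (a : ℂ) (f : (ℂ × ℂ) →L[ℂ] ℂ) : ‖a • f‖ = ‖a‖ * ‖f‖ := norm_smul a f
    refine (norm_add_le _ _).trans (add_le_add ?_ ?_)
    · rw [hns, norm_mul]
      have h1 := ContinuousLinearMap.norm_fst_le ℂ ℂ ℂ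
      have h2 := hF (m+1) k p hp
      have h3 : ‖(2:ℂ)‖ = 2 := by simp
      rw [h3]
      calc _ ≤ 2 * ‖F (m+1) k p‖ * 1 := by gcongr
        _ ≤ _ := by rw [mul_one]; gcongr
    · rw [hns, norm_mul]
      have h1 := ContinuousLinearMap.norm_snd_le ℂ ℂ ℂ
      have h2 := hF (m+2) k p hp
      calc _ ≤ ‖1 / ((Real.pi : ℂ) * I)‖ * ‖F (m+2) k p‖ * 1 := by gcongr
        _ ≤ _ := by rw [mul_one]; gcongr
  have hu_sum : Summable u :=
    ((eg_sumbound (m+1) e S hT).mul_left _).add ((eg_sumbound (m+2) e S hT).mul_left _)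
  have hsum (m : ℕ) : Summable fun k : ℤ => F m k (z, w) := (eg_summable_norm m e z hw).of_norm
  have key := hasFDerivAt_tsum_of_isPreconnected hu_sum hVo hVp hf hu hVmem (hsum m) hVmem
  refine key.congr_fderiv ?_
  have H1 : HasSum (fun k => F (m+1) k (z,w)) (egPhi (m+1) e z w) := (hsum (m+1)).hasSum
  have H2 : HasSum (fun k => F (m+2) k (z,w)) (egPhi (m+2) e z w) := (hsum (m+2)).hasSum
  exact (((H1.mul_left 2).smul_const _).add
    ((H2.mul_left (1 / ((Real.pi : ℂ) * I))).smul_const _)).tsum_eq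

/-- `egT m e u τ` is the `m`-th `u`-derivative of the theta function with characteristic `e/2`. -/
noncomputable def egT (m : ℕ) (e : ℤ) (u τ : ℂ) : ℂ := egPhi m e (u / 2) (τ / 4)

lemma im_div4_s2 {τ : ℂ} (h : 0 < im τ) : 0 < im (τ / 4) := by
  have : im (τ / 4) = im τ / 4 := by
    rw [show (4:ℂ) = ((4:ℝ):ℂ) by norm_num, Complex.div_ofReal_im]
  rw [this]; positivity

lemma im_div2_s2 {τ : ℂ} (h : 0 < im τ) : 0 < im (τ / 2) := by
  have : im (τ / 2) = im τ / 2 := by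
    rw [show (2:ℂ) = ((2:ℝ):ℂ) by norm_num, Complex.div_ofReal_im]
  rw [this]; positivity

lemma egT_hasFDerivAt (m : ℕ) (e : ℤ) (u : ℂ) {τ : ℂ} (hτ : 0 < im τ) :
    HasFDerivAt (fun p : ℂ × ℂ => egT m e p.1 p.2)
      ((egT (m+1) e u τ) • (ContinuousLinearMap.fst ℂ ℂ ℂ) +
        (1 / (4 * (Real.pi : ℂ) * I) * egT (m+2) e u τ) • (ContinuousLinearMap.snd ℂ ℂ ℂ))
      (u, τ) := by
  have h := egPhi_hasFDerivAt m e (u / 2) (im_div4_s2 hτ)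
  have h1 : HasFDerivAt (fun p : ℂ × ℂ => (p.1 / 2, p.2 / 4))
      (((2⁻¹ : ℂ) • ContinuousLinearMap.fst ℂ ℂ ℂ).prod
        ((4⁻¹ : ℂ) • ContinuousLinearMap.snd ℂ ℂ ℂ)) (u, τ) := by
    refine HasFDerivAt.prodMk ?_ ?_
    · simpa [div_eq_inv_mul] using (hasFDerivAt_fst (𝕜 := ℂ) (p := (u, τ))).const_mul (2⁻¹ : ℂ)
    · simpa [div_eq_inv_mul] using (hasFDerivAt_snd (𝕜 := ℂ) (p := (u, τ))).const_mul (4⁻¹ : ℂ)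
  have h2 := HasFDerivAt.comp (u, τ) (f := fun p : ℂ × ℂ => (p.1 / 2, p.2 / 4)) h h1
  refine h2.congr_fderiv ?_
  ext
  · simp [egT]; ring
  · simp [egT]; ring

lemma egT_hasDerivAt (m : ℕ) (e : ℤ) (u : ℂ) {τ : ℂ} (hτ : 0 < im τ) :
    HasDerivAt (fun v => egT m e v τ) (egT (m+1) e u τ) u := by
  have h := (egT_hasFDerivAt m e u hτ).comp_hasDerivAt u
    ((hasDerivAt_id u).prodMk (hasDerivAt_const u τ))
  simpa [Function.comp_def] using h

/-- The summand of `egT 0`. -/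
lemma egT_zero_eq (e : ℤ) (u τ : ℂ) :
    egT 0 e u τ = ∑' k : ℤ, jacobiTheta₂_term (2 * k + e) (u / 2) (τ / 4) := by
  simp [egT, egPhi]

lemma egT_zero_summable (e : ℤ) (u : ℂ) {τ : ℂ} (hτ : 0 < im τ) :
    Summable (fun k : ℤ => ‖jacobiTheta₂_term (2 * k + e) (u / 2) (τ / 4)‖) := by
  simpa using eg_summable_norm 0 e (u / 2) (im_div4_s2 hτ)

lemma theta1_eq_s2 (u τ : ℂ) : theta1 u τ = - egT 0 1 (u + 1/2) τ := by
  rw [theta1, egT_zero_eq]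
  congr 1
  refine tsum_congr fun k => ?_
  rw [jacobiTheta₂_term]
  congr 1
  push_cast
  ring

lemma theta4_eq_s2 (u τ : ℂ) : theta4 u τ = egT 0 0 (u + 1/2) τ := by
  rw [theta4, egT_zero_eq]
  refine tsum_congr fun k => ?_
  rw [jacobiTheta₂_term]
  congr 1
  push_cast
  ring

lemma egT0_add_one (u τ : ℂ) (m : ℕ) : egT m 0 (u + 1) τ = egT m 0 u τ := by
  rw [egT, egT, egPhi, egPhi]
  refine tsum_congr fun k => ?_
  congr 1
  rw [jacobiTheta₂_term, jacobiTheta₂_term, Complex.exp_eq_exp_iff_exists_int]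
  exact ⟨k, by push_cast; ring⟩

lemma egT1_add_one (u τ : ℂ) (m : ℕ) : egT m 1 (u + 1) τ = -egT m 1 u τ := by
  rw [egT, egT, egPhi, egPhi, ← tsum_neg]
  refine tsum_congr fun k => ?_
  rw [← mul_neg]
  congr 1
  rw [jacobiTheta₂_term, jacobiTheta₂_term, ← mul_neg_one, ← Complex.exp_pi_mul_I,
    ← Complex.exp_add, Complex.exp_eq_exp_iff_exists_int]
  exact ⟨k, by push_cast; ring⟩

lemma eg_term_neg (n : ℤ) (u τ : ℂ) :
    jacobiTheta₂_term (-n) (-u) τ = jacobiTheta₂_term n u τ := by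
  rw [jacobiTheta₂_term, jacobiTheta₂_term]
  congr 1
  push_cast
  ring

lemma egT0_neg (u τ : ℂ) (m : ℕ) : egT m 0 (-u) τ = (-1) ^ m * egT m 0 u τ := by
  rw [egT, egT, egPhi, egPhi, ← tsum_mul_left, ← (Equiv.neg ℤ).tsum_eq]
  refine tsum_congr fun k => ?_
  have : 2 * (Equiv.neg ℤ k) + 0 = -(2 * k + 0) := by simp
  rw [this, neg_div, eg_term_neg, ← mul_assoc, ← mul_pow]
  push_cast
  congr 2
  ring

lemma egT1_neg (u τ : ℂ) (m : ℕ) : egT m 1 (-u) τ = (-1) ^ m * egT m 1 u τ := by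
  rw [egT, egT, egPhi, egPhi, ← tsum_mul_left,
    ← ((Equiv.neg ℤ).trans (Equiv.subRight 1)).tsum_eq]
  refine tsum_congr fun k => ?_
  have : 2 * (((Equiv.neg ℤ).trans (Equiv.subRight 1)) k) + 1 = -(2 * k + 1) := by
    simp; ring
  rw [this, neg_div, eg_term_neg, ← mul_assoc, ← mul_pow]
  push_cast
  congr 2
  ring

/-- Reindexing of the square lattice by parity. -/
def egMap : (ℤ × ℤ) ⊕ (ℤ × ℤ) → ℤ × ℤ
  | Sum.inl p => (p.1 + p.2, p.1 - p.2 - 1)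
  | Sum.inr p => (p.1 + p.2, p.1 - p.2)

lemma egMap_bij : Function.Bijective egMap := by
  constructor
  · rintro (⟨a, b⟩ | ⟨a, b⟩) (⟨c, d⟩ | ⟨c, d⟩) h <;> simp only [egMap, Prod.mk.injEq] at h <;>
      simp only [Sum.inl.injEq, Sum.inr.injEq, Prod.mk.injEq, reduceCtorEq] <;> omega
  · rintro ⟨k, l⟩
    rcases Int.even_or_odd' (k + l) with ⟨i, h | h⟩
    · exact ⟨Sum.inr (i, k - i), by simp only [egMap, Prod.mk.injEq]; omega⟩
    · exact ⟨Sum.inl (i + 1, k - i - 1), by simp only [egMap, Prod.mk.injEq]; omega⟩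

/-- The basic bilinear theta identity. -/
lemma eg_bilinear (x y : ℂ) {τ : ℂ} (hτ : 0 < im τ) :
    egT 0 1 x (τ / 2) * egT 0 1 y (τ / 2)
      = egT 0 0 (x + y) τ * egT 0 1 (x - y) τ + egT 0 1 (x + y) τ * egT 0 0 (x - y) τ := by
  have h2 := im_div2_s2 hτ
  simp only [egT_zero_eq]
  rw [tsum_mul_tsum_of_summable_norm (egT_zero_summable 1 x h2) (egT_zero_summable 1 y h2),
    tsum_mul_tsum_of_summable_norm (egT_zero_summable 0 _ hτ) (egT_zero_summable 1 _ hτ),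
    tsum_mul_tsum_of_summable_norm (egT_zero_summable 1 _ hτ) (egT_zero_summable 0 _ hτ),
    ← (Equiv.ofBijective egMap egMap_bij).tsum_eq]
  have s1 := summable_mul_of_summable_norm
    (egT_zero_summable 0 (x + y) hτ) (egT_zero_summable 1 (x - y) hτ)
  have s2 := summable_mul_of_summable_norm
    (egT_zero_summable 1 (x + y) hτ) (egT_zero_summable 0 (x - y) hτ)
  refine (HasSum.sum (f := fun c => jacobiTheta₂_term (2 * (Equiv.ofBijective egMap egMap_bij c).1 + 1) (x / 2) (τ / 2 / 4) *
      jacobiTheta₂_term (2 * (Equiv.ofBijective egMap egMap_bij c).2 + 1) (y / 2) (τ / 2 / 4)) ?_ ?_).tsum_eq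
  · refine Eq.subst (motive := fun g => HasSum g _) (funext fun p => ?_) s1.hasSum
    symm
    simp only [Function.comp_apply, Equiv.ofBijective_apply, egMap, jacobiTheta₂_term,
      ← Complex.exp_add]
    congr 1
    push_cast
    ring
  · refine Eq.subst (motive := fun g => HasSum g _) (funext fun p => ?_) s2.hasSum
    symm
    simp only [Function.comp_apply, Equiv.ofBijective_apply, egMap, jacobiTheta₂_term,
      ← Complex.exp_add]
    congr 1
    push_cast
    ring

/-! ### Consequences of the bilinear identity -/

lemma eg_half (τ : ℂ) : egT 0 1 (1/2) τ = 0 := by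
  have h := egT1_add_one (-(1/2)) τ 0
  rw [egT1_neg, show -(1/2 : ℂ) + 1 = 1/2 by norm_num, pow_zero, one_mul] at h
  linear_combination h / 2

lemma eg_d_zero (τ : ℂ) : egT 1 1 0 τ = 0 := by
  have h := egT1_neg 0 τ 1
  rw [neg_zero] at h
  linear_combination h / 2

lemma eg_bilinear_shift (x y : ℂ) {τ : ℂ} (hτ : 0 < im τ) :
    egT 0 1 (x + 1/2) (τ / 2) * egT 0 1 (y + 1/2) (τ / 2)
      = egT 0 0 (x + y) τ * egT 0 1 (x - y) τ - egT 0 1 (x + y) τ * egT 0 0 (x - y) τ := by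
  rw [eg_bilinear _ _ hτ, show x + 1/2 + (y + 1/2) = x + y + 1 by ring,
    show x + 1/2 - (y + 1/2) = x - y by ring, egT0_add_one, egT1_add_one]
  ring

lemma eg_L1 (x : ℂ) {τ : ℂ} (hτ : 0 < im τ) :
    2 * (egT 0 0 x τ * egT 0 1 x τ) = egT 0 1 0 (τ / 2) * egT 0 1 x (τ / 2) := by
  have h1 := eg_bilinear x 0 hτ
  have h2 := eg_bilinear_shift x 0 hτ
  rw [zero_add, eg_half] at h2
  simp only [add_zero, sub_zero] at h1 h2
  linear_combination -h1 - h2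

lemma egT_hasDerivAt_comp (m : ℕ) (e : ℤ) {τ : ℂ} (hτ : 0 < im τ) {g : ℂ → ℂ} {g' y : ℂ}
    (hg : HasDerivAt g g' y) :
    HasDerivAt (fun v => egT m e (g v) τ) (egT (m+1) e (g y) τ * g') y :=
  (egT_hasDerivAt m e (g y) hτ).comp y hg

lemma eg_L2 (x : ℂ) {τ : ℂ} (hτ : 0 < im τ) :
    2 * (egT 1 0 x τ * egT 0 1 x τ - egT 0 0 x τ * egT 1 1 x τ)
      = egT 1 1 (1/2) (τ / 2) * egT 0 1 (x + 1/2) (τ / 2) := by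
  have hσ := im_div2_s2 hτ
  have hF : (fun y => 2 * (egT 0 0 (x + y) τ * egT 0 1 (x - y) τ))
      = fun y => egT 0 1 x (τ/2) * egT 0 1 y (τ/2)
        + egT 0 1 (x + 1/2) (τ/2) * egT 0 1 (y + 1/2) (τ/2) := by
    funext y
    linear_combination -eg_bilinear x y hτ - eg_bilinear_shift x y hτ
  have d1 := ((egT_hasDerivAt_comp 0 0 hτ ((hasDerivAt_id (0:ℂ)).const_add x)).mul
    (egT_hasDerivAt_comp 0 1 hτ ((hasDerivAt_id (0:ℂ)).const_sub x))).const_mul 2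
  have d2 := ((egT_hasDerivAt_comp 0 1 hσ (hasDerivAt_id (0:ℂ))).const_mul
      (egT 0 1 x (τ/2))).add
    ((egT_hasDerivAt_comp 0 1 hσ ((hasDerivAt_id (0:ℂ)).add_const (1/2))).const_mul
      (egT 0 1 (x + 1/2) (τ/2)))
  have h := HasDerivAt.unique (d1.congr_of_eventuallyEq (Filter.Eventually.of_forall
    fun y => (congrFun hF y).symm)) d2
  simp only [id, add_zero, sub_zero, zero_add, eg_d_zero] at h
  linear_combination h

lemma eg_L1' (x : ℂ) {τ : ℂ} (hτ : 0 < im τ) :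
    2 * (egT 1 0 x τ * egT 0 1 x τ + egT 0 0 x τ * egT 1 1 x τ)
      = egT 0 1 0 (τ / 2) * egT 1 1 x (τ / 2) := by
  have hσ := im_div2_s2 hτ
  have d1 := ((egT_hasDerivAt 0 0 x hτ).mul (egT_hasDerivAt 0 1 x hτ)).const_mul 2
  have d2 := (egT_hasDerivAt 0 1 x hσ).const_mul (egT 0 1 0 (τ/2))
  exact HasDerivAt.unique (d1.congr_of_eventuallyEq (Filter.Eventually.of_forall
    fun y => (eg_L1 y hτ).symm)) d2

lemma eg_L2' (x : ℂ) {τ : ℂ} (hτ : 0 < im τ) :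
    2 * (egT 2 0 x τ * egT 0 1 x τ - egT 0 0 x τ * egT 2 1 x τ)
      = egT 1 1 (1/2) (τ / 2) * egT 1 1 (x + 1/2) (τ / 2) := by
  have hσ := im_div2_s2 hτ
  have d1 := (((egT_hasDerivAt 1 0 x hτ).mul (egT_hasDerivAt 0 1 x hτ)).sub
    ((egT_hasDerivAt 0 0 x hτ).mul (egT_hasDerivAt 1 1 x hτ))).const_mul 2
  have d2 := (egT_hasDerivAt_comp 0 1 hσ ((hasDerivAt_id x).add_const (1/2))).const_mul
    (egT 1 1 (1/2) (τ/2))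
  have h := HasDerivAt.unique (d1.congr_of_eventuallyEq (Filter.Eventually.of_forall
    fun y => (eg_L2 y hτ).symm)) d2
  simp only [id] at h
  linear_combination h

lemma eg_L3 (x y : ℂ) {τ : ℂ} (hτ : 0 < im τ) :
    egT 1 1 (x + 1/2) (τ / 2) * egT 0 1 (y + 1/2) (τ / 2)
      + egT 0 1 (x + 1/2) (τ / 2) * egT 1 1 (y + 1/2) (τ / 2)
      = 2 * (egT 1 0 (x + y) τ * egT 0 1 (x - y) τ
        - egT 1 1 (x + y) τ * egT 0 0 (x - y) τ) := by
  have hσ := im_div2_s2 hτ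
  have hF : ∀ h : ℂ, egT 0 1 (x + h + 1/2) (τ / 2) * egT 0 1 (y + h + 1/2) (τ / 2)
      = egT 0 0 (x + y + 2 * h) τ * egT 0 1 (x - y) τ
        - egT 0 1 (x + y + 2 * h) τ * egT 0 0 (x - y) τ := by
    intro h
    rw [eg_bilinear_shift _ _ hτ]
    ring_nf
  have d1 := (egT_hasDerivAt_comp 0 1 hσ
      (((hasDerivAt_id (0:ℂ)).const_add x).add_const (1/2))).mul
    (egT_hasDerivAt_comp 0 1 hσ (((hasDerivAt_id (0:ℂ)).const_add y).add_const (1/2)))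
  have dd := ((hasDerivAt_id (0:ℂ)).const_mul 2).const_add (x + y)
  have d2 := ((egT_hasDerivAt_comp 0 0 hτ dd).mul_const (egT 0 1 (x - y) τ)).sub
    ((egT_hasDerivAt_comp 0 1 hτ dd).mul_const (egT 0 0 (x - y) τ))
  have h := HasDerivAt.unique (d1.congr_of_eventuallyEq (Filter.Eventually.of_forall
    fun y => (hF y).symm)) d2
  simp only [id, add_zero, mul_zero] at h
  linear_combination h

/-- Derivatives of (minus) `theta1`. -/
noncomputable def egA (m : ℕ) (u τ : ℂ) : ℂ := egT m 1 (u + 1/2) τ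
/-- Derivatives of `theta4`. -/
noncomputable def egB (m : ℕ) (u τ : ℂ) : ℂ := egT m 0 (u + 1/2) τ

lemma eg_E (x y : ℂ) {τ : ℂ} (hτ : 0 < im τ) :
    (egA 1 (x+y) τ * egB 0 (x+y) τ - egA 0 (x+y) τ * egB 1 (x+y) τ) *
      ((egA 1 x τ * egB 0 x τ + egA 0 x τ * egB 1 x τ) * (egA 0 y τ * egB 0 y τ)
        + (egA 0 x τ * egB 0 x τ) * (egA 1 y τ * egB 0 y τ + egA 0 y τ * egB 1 y τ))
    - (egA 1 x τ * egB 0 x τ - egA 0 x τ * egB 1 x τ)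
      * (egA 1 y τ * egB 0 y τ - egA 0 y τ * egB 1 y τ) * (egA 0 (x+y) τ * egB 0 (x+y) τ)
    - (egA 2 (x+y) τ * egB 0 (x+y) τ - egA 0 (x+y) τ * egB 2 (x+y) τ)
      * (egA 0 x τ * egB 0 x τ) * (egA 0 y τ * egB 0 y τ) = 0 := by
  have v0 : ∀ u, egA 0 u τ * egB 0 u τ
      = egT 0 1 0 (τ/2) * egT 0 1 (u + 1/2) (τ/2) / 2 := by
    intro u
    rw [egA, egB]
    linear_combination eg_L1 (u + 1/2) hτ / 2
  have v1 : ∀ u, egA 1 u τ * egB 0 u τ + egA 0 u τ * egB 1 u τ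
      = egT 0 1 0 (τ/2) * egT 1 1 (u + 1/2) (τ/2) / 2 := by
    intro u
    rw [egA, egB, egA, egB]
    linear_combination eg_L1' (u + 1/2) hτ / 2
  have w0 : ∀ u, egA 1 u τ * egB 0 u τ - egA 0 u τ * egB 1 u τ
      = egT 1 1 (1/2) (τ/2) * egT 0 1 u (τ/2) / 2 := by
    intro u
    have h := eg_L2 (u + 1/2) hτ
    rw [show u + 1/2 + 1/2 = u + 1 by ring, egT1_add_one] at h
    rw [egA, egB, egA, egB]
    linear_combination - h / 2
  have w1 : ∀ u, egA 2 u τ * egB 0 u τ - egA 0 u τ * egB 2 u τ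
      = egT 1 1 (1/2) (τ/2) * egT 1 1 u (τ/2) / 2 := by
    intro u
    have h := eg_L2' (u + 1/2) hτ
    rw [show u + 1/2 + 1/2 = u + 1 by ring, egT1_add_one] at h
    rw [egA, egB, egA, egB]
    linear_combination - h / 2
  rw [w0, w0, w0, w1, v0, v0, v0, v1, v1]
  have e1 := eg_L1 (x + y) hτ
  have e1' := eg_L1' (x + y) hτ
  have e2 := eg_L2 (x + y) hτ
  have e3 := eg_L3 x y hτ
  have e4 := eg_bilinear x y hτ
  have e5 := eg_bilinear_shift x y hτ
  have main : egT 0 1 0 (τ/2) * egT 0 1 (x+y) (τ/2) * (egT 1 1 (x + 1/2) (τ / 2) * egT 0 1 (y + 1/2) (τ / 2)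
      + egT 0 1 (x + 1/2) (τ / 2) * egT 1 1 (y + 1/2) (τ / 2))
      - egT 1 1 (1/2) (τ/2) * egT 0 1 (x + y + 1/2) (τ/2) *
        (egT 0 1 x (τ / 2) * egT 0 1 y (τ / 2))
      - egT 0 1 0 (τ/2) * egT 1 1 (x+y) (τ/2) *
        (egT 0 1 (x + 1/2) (τ / 2) * egT 0 1 (y + 1/2) (τ / 2)) = 0 := by
    rw [← e1, ← e1', ← e2, e3, e4, e5]
    ring
  linear_combination egT 0 1 0 (τ/2) * egT 1 1 (1/2) (τ/2) / 8 * main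

lemma eg_J (x y : ℂ) {τ : ℂ} (hτ : 0 < im τ)
    (hxA : egA 0 x τ ≠ 0) (hxB : egB 0 x τ ≠ 0) (hyA : egA 0 y τ ≠ 0) (hyB : egB 0 y τ ≠ 0)
    (hsA : egA 0 (x+y) τ ≠ 0) (hsB : egB 0 (x+y) τ ≠ 0) :
    (egA 1 (x+y) τ / egA 0 (x+y) τ - egB 1 (x+y) τ / egB 0 (x+y) τ) *
      ((egA 1 x τ / egA 0 x τ + egB 1 x τ / egB 0 x τ)
        + (egA 1 y τ / egA 0 y τ + egB 1 y τ / egB 0 y τ))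
    - (egA 1 x τ / egA 0 x τ - egB 1 x τ / egB 0 x τ)
        * (egA 1 y τ / egA 0 y τ - egB 1 y τ / egB 0 y τ)
    = egA 2 (x+y) τ / egA 0 (x+y) τ - egB 2 (x+y) τ / egB 0 (x+y) τ := by
  have h := eg_E x y hτ
  field_simp
  linear_combination h

lemma egA_hasDerivAt (m : ℕ) (u : ℂ) {τ : ℂ} (hτ : 0 < im τ) :
    HasDerivAt (fun v => egA m v τ) (egA (m+1) u τ) u := by
  have h := egT_hasDerivAt_comp m 1 hτ ((hasDerivAt_id u).add_const (1/2))
  simpa [egA] using h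

lemma egB_hasDerivAt (m : ℕ) (u : ℂ) {τ : ℂ} (hτ : 0 < im τ) :
    HasDerivAt (fun v => egB m v τ) (egB (m+1) u τ) u := by
  have h := egT_hasDerivAt_comp m 0 hτ ((hasDerivAt_id u).add_const (1/2))
  simpa [egB] using h

lemma zeta1_eq_s2 (u : ℂ) {τ : ℂ} (hτ : 0 < im τ) : zeta1 u τ = egA 1 u τ / egA 0 u τ := by
  have h : (fun v => theta1 v τ) = fun v => - egA 0 v τ := funext fun v => theta1_eq_s2 v τ
  rw [zeta1, h, (egA_hasDerivAt 0 u hτ).fun_neg.deriv, theta1_eq_s2, neg_div_neg_eq]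
  rfl

lemma zeta4_eq_s2 (u : ℂ) {τ : ℂ} (hτ : 0 < im τ) : zeta4 u τ = egB 1 u τ / egB 0 u τ := by
  have h : (fun v => theta4 v τ) = fun v => egB 0 v τ := funext fun v => theta4_eq_s2 v τ
  rw [zeta4, h, (egB_hasDerivAt 0 u hτ).deriv, theta4_eq_s2]
  rfl

lemma Sp_eq_s2 (u : ℂ) {τ : ℂ} (hτ : 0 < im τ) :
    Sp u τ = egA 1 u τ / egA 0 u τ - egB 1 u τ / egB 0 u τ := by
  rw [Sp, zeta1_eq_s2 u hτ, zeta4_eq_s2 u hτ]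

lemma zeta1_half_s2 (u : ℂ) {τ : ℂ} (hτ : 0 < im τ) (hA : egA 0 u τ ≠ 0) (hB : egB 0 u τ ≠ 0) :
    zeta1 u (τ / 2) = egA 1 u τ / egA 0 u τ + egB 1 u τ / egB 0 u τ := by
  rw [zeta1_eq_s2 u (im_div2_s2 hτ)]
  have h0 : 2 * (egB 0 u τ * egA 0 u τ) = egT 0 1 0 (τ/2) * egA 0 u (τ/2) := eg_L1 (u + 1/2) hτ
  have h1 : 2 * (egB 1 u τ * egA 0 u τ + egB 0 u τ * egA 1 u τ)
    = egT 0 1 0 (τ/2) * egA 1 u (τ/2) := eg_L1' (u + 1/2) hτ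
  have hne : egT 0 1 0 (τ/2) * egA 0 u (τ/2) ≠ 0 := by
    rw [← h0]
    exact mul_ne_zero two_ne_zero (mul_ne_zero hB hA)
  have hc := left_ne_zero_of_mul hne
  have hA' := right_ne_zero_of_mul hne
  rw [← mul_div_mul_left _ _ hc, ← h0, ← h1]
  field_simp
  ring

lemma egP_hasDerivAt (m : ℕ) (u : ℂ) {τ : ℂ} (hτ : 0 < im τ) (hA : egA 0 u τ ≠ 0) :
    HasDerivAt (fun v => egA m v τ / egA 0 v τ)
      ((egA (m+1) u τ * egA 0 u τ - egA m u τ * egA 1 u τ) / egA 0 u τ ^ 2) u :=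
  (egA_hasDerivAt m u hτ).div (egA_hasDerivAt 0 u hτ) hA

lemma egQ_hasDerivAt (m : ℕ) (u : ℂ) {τ : ℂ} (hτ : 0 < im τ) (hB : egB 0 u τ ≠ 0) :
    HasDerivAt (fun v => egB m v τ / egB 0 v τ)
      ((egB (m+1) u τ * egB 0 u τ - egB m u τ * egB 1 u τ) / egB 0 u τ ^ 2) u :=
  (egB_hasDerivAt m u hτ).div (egB_hasDerivAt 0 u hτ) hB

lemma Sp_hasDerivAt (u : ℂ) {τ : ℂ} (hτ : 0 < im τ) (hA : egA 0 u τ ≠ 0) (hB : egB 0 u τ ≠ 0) :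
    HasDerivAt (fun v => Sp v τ) (Spp u τ) u := by
  have h := (egP_hasDerivAt 1 u hτ hA).fun_sub (egQ_hasDerivAt 1 u hτ hB)
  have e : (fun v => Sp v τ) = fun v => egA 1 v τ / egA 0 v τ - egB 1 v τ / egB 0 v τ :=
    funext fun v => Sp_eq_s2 v hτ
  rw [← e] at h
  exact h.differentiableAt.hasDerivAt

lemma Spp_eq_s2 (u : ℂ) {τ : ℂ} (hτ : 0 < im τ) (hA : egA 0 u τ ≠ 0) (hB : egB 0 u τ ≠ 0) :
    Spp u τ = (egA 2 u τ * egA 0 u τ - egA 1 u τ * egA 1 u τ) / egA 0 u τ ^ 2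
      - (egB 2 u τ * egB 0 u τ - egB 1 u τ * egB 1 u τ) / egB 0 u τ ^ 2 := by
  have h := (egP_hasDerivAt 1 u hτ hA).fun_sub (egQ_hasDerivAt 1 u hτ hB)
  have e : (fun v => Sp v τ) = fun v => egA 1 v τ / egA 0 v τ - egB 1 v τ / egB 0 v τ :=
    funext fun v => Sp_eq_s2 v hτ
  rw [Spp, e, h.deriv]

lemma eg_eventually (u : ℂ) {τ : ℂ} (hτ : 0 < im τ) (hA : egA 0 u τ ≠ 0) (hB : egB 0 u τ ≠ 0) :
    ∀ᶠ v in nhds u, egA 0 v τ ≠ 0 ∧ egB 0 v τ ≠ 0 :=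
  ((egA_hasDerivAt 0 u hτ).continuousAt.eventually_ne hA).and
    ((egB_hasDerivAt 0 u hτ).continuousAt.eventually_ne hB)

lemma zeta1_half_hasDerivAt (u : ℂ) {τ : ℂ} (hτ : 0 < im τ)
    (hA : egA 0 u τ ≠ 0) (hB : egB 0 u τ ≠ 0) :
    HasDerivAt (fun v => zeta1 v (τ / 2)) (-wp1 u (τ / 2)) u := by
  have h := (egP_hasDerivAt 1 u hτ hA).fun_add (egQ_hasDerivAt 1 u hτ hB)
  have h2 : HasDerivAt (fun v => zeta1 v (τ / 2)) _ u := h.congr_of_eventuallyEq (by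
    filter_upwards [eg_eventually u hτ hA hB] with v hv
    exact zeta1_half_s2 v hτ hv.1 hv.2)
  rw [wp1, neg_neg]
  exact h2.differentiableAt.hasDerivAt

/-- The derivative (in the first point) of the addition formula. -/
lemma eg_key (a b : ℂ) {τ : ℂ} (hτ : 0 < im τ)
    (haA : egA 0 a τ ≠ 0) (haB : egB 0 a τ ≠ 0) (hbA : egA 0 b τ ≠ 0) (hbB : egB 0 b τ ≠ 0)
    (hdA : egA 0 (a - b) τ ≠ 0) (hdB : egB 0 (a - b) τ ≠ 0) :
    Spp a τ * (zeta1 (a - b) (τ / 2) + zeta1 b (τ / 2)) - Sp a τ * wp1 (a - b) (τ / 2)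
      - Spp (a - b) τ * Sp b τ
    = (egA 3 a τ * egA 0 a τ - egA 2 a τ * egA 1 a τ) / egA 0 a τ ^ 2
      - (egB 3 a τ * egB 0 a τ - egB 2 a τ * egB 1 a τ) / egB 0 a τ ^ 2 := by
  have hR := (egP_hasDerivAt 2 a hτ haA).fun_sub (egQ_hasDerivAt 2 a hτ haB)
  have hsub : HasDerivAt (fun v => v - b) 1 a := (hasDerivAt_id a).sub_const b
  have dZ : HasDerivAt (fun v => zeta1 (v - b) (τ / 2)) (-wp1 (a - b) (τ / 2) * 1) a :=
    HasDerivAt.comp (h₂ := fun v => zeta1 v (τ / 2)) (h := fun v => v - b) a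
      (zeta1_half_hasDerivAt (a - b) hτ hdA hdB) hsub
  have dS : HasDerivAt (fun v => Sp (v - b) τ) (Spp (a - b) τ * 1) a :=
    HasDerivAt.comp (h₂ := fun v => Sp v τ) (h := fun v => v - b) a
      (Sp_hasDerivAt (a - b) hτ hdA hdB) hsub
  have hL := ((Sp_hasDerivAt a hτ haA haB).fun_mul (dZ.add_const (zeta1 b (τ / 2)))).fun_sub
    (dS.mul_const (Sp b τ))
  have hev : (fun v => Sp v τ * (zeta1 (v - b) (τ / 2) + zeta1 b (τ / 2)) - Sp (v - b) τ * Sp b τ)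
      =ᶠ[nhds a] fun v => egA 2 v τ / egA 0 v τ - egB 2 v τ / egB 0 v τ := by
    have h2 := hsub.continuousAt.eventually (eg_eventually (a - b) hτ hdA hdB)
    filter_upwards [eg_eventually a hτ haA haB, h2] with v hv hw
    have hJ := eg_J (v - b) b hτ hw.1 hw.2 hbA hbB
    rw [sub_add_cancel] at hJ
    rw [Sp_eq_s2 v hτ, Sp_eq_s2 (v - b) hτ, Sp_eq_s2 b hτ, zeta1_half_s2 _ hτ hw.1 hw.2,
      zeta1_half_s2 _ hτ hbA hbB]
    exact hJ hv.1 hv.2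
  have h := HasDerivAt.unique (hR.congr_of_eventuallyEq hev) hL
  linear_combination -h

lemma egA_neg (m : ℕ) (u τ : ℂ) : egA m (-u) τ = -((-1) ^ m * egA m u τ) := by
  have h := egT1_add_one (u - 1/2) τ m
  rw [egA, egA, show -u + 1/2 = -(u - 1/2) by ring, egT1_neg,
    show u + 1/2 = u - 1/2 + 1 by ring, h]
  ring

lemma egB_neg (m : ℕ) (u τ : ℂ) : egB m (-u) τ = (-1) ^ m * egB m u τ := by
  have h := egT0_add_one (u - 1/2) τ m
  rw [egB, egB, show -u + 1/2 = -(u - 1/2) by ring, egT0_neg,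
    show u + 1/2 = u - 1/2 + 1 by ring, h]

lemma zeta1_neg (u : ℂ) {τ : ℂ} (hτ : 0 < im τ) : zeta1 (-u) τ = -zeta1 u τ := by
  rw [zeta1_eq_s2 _ hτ, zeta1_eq_s2 _ hτ, egA_neg, egA_neg]
  simp [div_neg]

lemma Sp_neg (u : ℂ) {τ : ℂ} (hτ : 0 < im τ) : Sp (-u) τ = -Sp u τ := by
  rw [Sp_eq_s2 _ hτ, Sp_eq_s2 _ hτ, egA_neg, egA_neg, egB_neg, egB_neg]
  simp [div_neg, neg_div]
  ring

lemma wp1_neg (u : ℂ) {τ : ℂ} (hτ : 0 < im τ) : wp1 (-u) τ = wp1 u τ := by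
  have h := deriv_comp_neg (f := fun v => zeta1 v τ) (x := u)
  have e : (fun v => zeta1 (-v) τ) = fun v => -zeta1 v τ := funext fun v => zeta1_neg v hτ
  rw [e, deriv.fun_neg] at h
  rw [wp1, wp1]
  linear_combination -h

lemma Spp_neg (u : ℂ) {τ : ℂ} (hτ : 0 < im τ) : Spp (-u) τ = Spp u τ := by
  have h := deriv_comp_neg (f := fun v => Sp v τ) (x := u)
  have e : (fun v => Sp (-v) τ) = fun v => -Sp v τ := funext fun v => Sp_neg v hτ
  rw [e, deriv.fun_neg] at h
  rw [Spp, Spp]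
  linear_combination h

lemma egT_shift_hasFDerivAt (m : ℕ) (e : ℤ) (u : ℂ) {τ : ℂ} (hτ : 0 < im τ) :
    HasFDerivAt (fun p : ℂ × ℂ => egT m e (p.1 + 1/2) p.2)
      ((egT (m+1) e (u + 1/2) τ) • (ContinuousLinearMap.fst ℂ ℂ ℂ) +
        (1 / (4 * (Real.pi : ℂ) * I) * egT (m+2) e (u + 1/2) τ) •
          (ContinuousLinearMap.snd ℂ ℂ ℂ)) (u, τ) := by
  have h1 : HasFDerivAt (fun p : ℂ × ℂ => (p.1 + 1/2, p.2))
      ((ContinuousLinearMap.fst ℂ ℂ ℂ).prod (ContinuousLinearMap.snd ℂ ℂ ℂ)) (u, τ) :=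
    HasFDerivAt.prodMk ((hasFDerivAt_fst (𝕜 := ℂ) (p := (u, τ))).add_const _) hasFDerivAt_snd
  have h2 := HasFDerivAt.comp (u, τ) (f := fun p : ℂ × ℂ => (p.1 + 1/2, p.2))
    (egT_hasFDerivAt m e (u + 1/2) hτ) h1
  refine h2.congr_fderiv ?_
  ext <;> simp

lemma eg_fderiv_div {f g : ℂ × ℂ → ℂ} {p : ℂ × ℂ} {f1 f2 g1 g2 : ℂ}
    (hf : HasFDerivAt f (f1 • (ContinuousLinearMap.fst ℂ ℂ ℂ) +
      f2 • (ContinuousLinearMap.snd ℂ ℂ ℂ)) p)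
    (hg : HasFDerivAt g (g1 • (ContinuousLinearMap.fst ℂ ℂ ℂ) +
      g2 • (ContinuousLinearMap.snd ℂ ℂ ℂ)) p) (h0 : g p ≠ 0) :
    HasFDerivAt (fun q => f q / g q)
      (((f1 * g p - f p * g1) / g p ^ 2) • (ContinuousLinearMap.fst ℂ ℂ ℂ) +
        ((f2 * g p - f p * g2) / g p ^ 2) • (ContinuousLinearMap.snd ℂ ℂ ℂ)) p := by
  have hi := (hasDerivAt_inv h0).comp_hasFDerivAt p hg
  have h := hf.mul hi
  simp only [div_eq_mul_inv (f _)]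
  refine h.congr_fderiv ?_
  ext
  · simp
    field_simp
    ring
  · simp
    field_simp
    ring

lemma Sp_hasFDerivAt (u : ℂ) {τ : ℂ} (hτ : 0 < im τ)
    (hA : egA 0 u τ ≠ 0) (hB : egB 0 u τ ≠ 0) :
    HasFDerivAt (fun p : ℂ × ℂ => Sp p.1 p.2)
      (Spp u τ • (ContinuousLinearMap.fst ℂ ℂ ℂ) +
        (1 / (4 * (Real.pi : ℂ) * I) *
          ((egA 3 u τ * egA 0 u τ - egA 2 u τ * egA 1 u τ) / egA 0 u τ ^ 2
      - (egB 3 u τ * egB 0 u τ - egB 2 u τ * egB 1 u τ) / egB 0 u τ ^ 2)) •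
          (ContinuousLinearMap.snd ℂ ℂ ℂ)) (u, τ) := by
  have hPA := eg_fderiv_div (egT_shift_hasFDerivAt 1 1 u hτ) (egT_shift_hasFDerivAt 0 1 u hτ) hA
  have hPB := eg_fderiv_div (egT_shift_hasFDerivAt 1 0 u hτ) (egT_shift_hasFDerivAt 0 0 u hτ) hB
  have h := hPA.fun_sub hPB
  have hev : (fun p : ℂ × ℂ => Sp p.1 p.2) =ᶠ[nhds (u, τ)] fun p =>
      egT 1 1 (p.1 + 1/2) p.2 / egT 0 1 (p.1 + 1/2) p.2
        - egT 1 0 (p.1 + 1/2) p.2 / egT 0 0 (p.1 + 1/2) p.2 := by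
    have ho : IsOpen {p : ℂ × ℂ | 0 < im p.2} :=
      isOpen_lt continuous_const (continuous_im.comp continuous_snd)
    filter_upwards [ho.mem_nhds (show (u, τ) ∈ {p : ℂ × ℂ | 0 < im p.2} from hτ)] with p hp
    exact Sp_eq_s2 p.1 hp
  refine (h.congr_of_eventuallyEq hev).congr_fderiv ?_
  rw [Spp_eq_s2 u hτ hA hB]
  simp only [egA, egB]
  ext
  · simp
  · simp
    ring

lemma eg_half_metric {N : ℕ} {U : Set (Fin N → ℝ)} (hU : IsOpen U)
    (ξ : Fin N → (Fin N → ℝ) → ℂ) (τ : (Fin N → ℝ) → ℂ)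
    (hξC2 : ∀ i, ContDiffOn ℝ 2 (ξ i) U)
    (hτC2 : ContDiffOn ℝ 2 τ U)
    (hup : ∀ x ∈ U, 0 < (τ x).im)
    (hGT1 : ∀ j k : Fin N, j ≠ k → ∀ x ∈ U,
      pdC j (ξ k) x = 1 / (4 * (Real.pi : ℂ) * Complex.I)
        * (zeta1 (ξ j x - ξ k x) (τ x / 2) - zeta1 (ξ j x) (τ x / 2)) * pdC j τ x)
    (hGT2 : ∀ j k : Fin N, j ≠ k → ∀ x ∈ U,
      pdC k (pdC j τ) x = 1 / (2 * (Real.pi : ℂ) * Complex.I)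
        * wp1 (ξ k x - ξ j x) (τ x / 2) * pdC k τ x * pdC j τ x)
    (hnz1 : ∀ i, ∀ x ∈ U, theta1 (ξ i x) (τ x) ≠ 0)
    (hnz2 : ∀ i, ∀ x ∈ U, theta4 (ξ i x) (τ x) ≠ 0)
    (hnz4 : ∀ i j : Fin N, i ≠ j → ∀ x ∈ U, theta1 (ξ i x - ξ j x) (τ x) ≠ 0)
    (hnz5 : ∀ i j : Fin N, i ≠ j → ∀ x ∈ U, theta4 (ξ i x - ξ j x) (τ x) ≠ 0)
    (i k : Fin N) (hik : i ≠ k) (x : Fin N → ℝ) (hx : x ∈ U) :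
      pdC k (gMetric ξ τ i) x
          = -(2 / (4 * (Real.pi : ℂ) * Complex.I) ^ 2)
            * Sp (ξ i x) (τ x) * Sp (ξ k x) (τ x) * Spp (ξ i x - ξ k x) (τ x)
            * pdC i τ x * pdC k τ x := by
  have hA : ∀ v, theta1 v (τ x) ≠ 0 → egA 0 v (τ x) ≠ 0 := by
    intro v hv h
    apply hv
    rw [theta1_eq_s2, neg_eq_zero]
    exact h
  have hB : ∀ v, theta4 v (τ x) ≠ 0 → egB 0 v (τ x) ≠ 0 := by
    intro v hv h
    apply hv
    rw [theta4_eq_s2]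
    exact h
  have hτ := hup x hx
  have hUx := hU.mem_nhds hx
  have key := eg_key (ξ i x) (ξ k x) hτ (hA _ (hnz1 i x hx)) (hB _ (hnz2 i x hx))
    (hA _ (hnz1 k x hx)) (hB _ (hnz2 k x hx)) (hA _ (hnz4 i k hik x hx))
    (hB _ (hnz5 i k hik x hx))
  have hS := Sp_hasFDerivAt (ξ i x) hτ (hA _ (hnz1 i x hx)) (hB _ (hnz2 i x hx))
  rw [← key] at hS
  have hξd : HasFDerivAt (ξ i) (fderiv ℝ (ξ i) x) x :=
    (((hξC2 i).contDiffAt hUx).differentiableAt (by norm_num)).hasFDerivAt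
  have hτd : HasFDerivAt τ (fderiv ℝ τ x) x :=
    ((hτC2.contDiffAt hUx).differentiableAt (by norm_num)).hasFDerivAt
  have hpd : HasFDerivAt (pdC i τ) (fderiv ℝ (pdC i τ) x) x := by
    have h1 : DifferentiableAt ℝ (fderiv ℝ τ) x :=
      ((hτC2.contDiffAt hUx).fderiv_right (m := 1) (by norm_num)).differentiableAt (by norm_num)
    have h2 : DifferentiableAt ℝ (pdC i τ) x :=
      h1.clm_apply (differentiableAt_const _)
    exact h2.hasFDerivAt
  have hSc := HasFDerivAt.comp x (f := fun y => (ξ i y, τ y)) (hS.restrictScalars ℝ)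
    (hξd.prodMk hτd)
  have hg := ((hSc.pow 2).const_mul (1 / (4 * (Real.pi : ℂ) * Complex.I))).mul hpd
  have hg' : HasFDerivAt (gMetric ξ τ i) _ x := hg
  have e1 := hGT1 k i hik.symm x hx
  have e2 := hGT2 i k hik x hx
  have hneg : ξ k x - ξ i x = -(ξ i x - ξ k x) := by ring
  rw [hneg, zeta1_neg _ (im_div2_s2 hτ)] at e1
  rw [hneg, wp1_neg _ (im_div2_s2 hτ)] at e2
  have hpi : (Real.pi : ℂ) ≠ 0 := by exact_mod_cast Real.pi_ne_zero
  rw [pdC, hg'.fderiv]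
  simp only [pdC] at e1 e2 ⊢
  simp [-one_div, e1, e2]
  field_simp
  ring

/-- The metric is of Egorov type (Proposition of Section 6):
∂g_i/∂λ_k = ∂g_k/∂λ_i, both sides being
−(2/(4πi)²) S'(ξ_i,τ) S'(ξ_k,τ) S''(ξ_i−ξ_k,τ) (∂τ/∂λ_i)(∂τ/∂λ_k). -/
theorem metric_is_Egorov
    (N : ℕ) (U : Set (Fin N → ℝ)) (hU : IsOpen U)
    (ξ : Fin N → (Fin N → ℝ) → ℂ) (τ : (Fin N → ℝ) → ℂ)
    (hξC2 : ∀ i, ContDiffOn ℝ 2 (ξ i) U)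
    (hτC2 : ContDiffOn ℝ 2 τ U)
    (hup : ∀ x ∈ U, 0 < (τ x).im)
    -- the elliptic Gibbons–Tsarev system
    (hGT1 : ∀ j k : Fin N, j ≠ k → ∀ x ∈ U,
      pdC j (ξ k) x = 1 / (4 * (Real.pi : ℂ) * Complex.I)
        * (zeta1 (ξ j x - ξ k x) (τ x / 2) - zeta1 (ξ j x) (τ x / 2)) * pdC j τ x)
    (hGT2 : ∀ j k : Fin N, j ≠ k → ∀ x ∈ U,
      pdC k (pdC j τ) x = 1 / (2 * (Real.pi : ℂ) * Complex.I)
        * wp1 (ξ k x - ξ j x) (τ x / 2) * pdC k τ x * pdC j τ x)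
    -- nonvanishing of the theta-function values appearing in denominators
    (hnz1 : ∀ i, ∀ x ∈ U, theta1 (ξ i x) (τ x) ≠ 0)
    (hnz2 : ∀ i, ∀ x ∈ U, theta4 (ξ i x) (τ x) ≠ 0)
    (hnz3 : ∀ i, ∀ x ∈ U, theta1 (ξ i x) (τ x / 2) ≠ 0)
    (hnz4 : ∀ i j : Fin N, i ≠ j → ∀ x ∈ U, theta1 (ξ i x - ξ j x) (τ x) ≠ 0)
    (hnz5 : ∀ i j : Fin N, i ≠ j → ∀ x ∈ U, theta4 (ξ i x - ξ j x) (τ x) ≠ 0)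
    (hnz6 : ∀ i j : Fin N, i ≠ j → ∀ x ∈ U, theta1 (ξ i x - ξ j x) (τ x / 2) ≠ 0)
    : ∀ i k : Fin N, i ≠ k → ∀ x ∈ U,
      pdC k (gMetric ξ τ i) x = pdC i (gMetric ξ τ k) x
      ∧ pdC k (gMetric ξ τ i) x
          = -(2 / (4 * (Real.pi : ℂ) * Complex.I) ^ 2)
            * Sp (ξ i x) (τ x) * Sp (ξ k x) (τ x) * Spp (ξ i x - ξ k x) (τ x)
            * pdC i τ x * pdC k τ x := by

  intro i k hik x hx
  have h1 := eg_half_metric hU ξ τ hξC2 hτC2 hup hGT1 hGT2 hnz1 hnz2 hnz4 hnz5 i k hik x hx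
  have h2 := eg_half_metric hU ξ τ hξC2 hτC2 hup hGT1 hGT2 hnz1 hnz2 hnz4 hnz5 k i hik.symm x hx
  refine ⟨?_, h1⟩
  rw [h1, h2, show ξ k x - ξ i x = -(ξ i x - ξ k x) by ring, Spp_neg _ (hup x hx)]
  ring
end

section
/- Γ_{ij} is half the logarithmic λ_j-derivative of g_i (identity (c2)): Let U ⊆ ℝ^N be open with coordinates λ₁,…,λ_N, and let ξ₁,…,ξ_N, τ : U → ℂ be C² functions with τ taking values in the upper half-plane, satisfying the elliptic Gibbons–Tsarev system, with all theta-function values appearing in denominators (including S'(ξ_i,τ)) nonzero on U. Then for all i ≠ j one has ∂/∂λ_j [ S'(ξ_i,τ)² ∂τ/∂λ_i ] = −(1/(2πi)) S'(ξ_i,τ) S'(ξ_j,τ) S''(ξ_i−ξ_j,τ) (∂τ/∂λ_i)(∂τ/∂λ_j) on U; equivalently, Γ_{ij} := −(1/(4πi))(S'(ξ_j,τ)/S'(ξ_i,τ)) S''(ξ_i−ξ_j,τ) ∂τ/∂λ_j satisfies 2 Γ_{ij} g_i = ∂g_i/∂λ_j where g_i = (1/(4πi)) S'(ξ_i,τ)²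 ∂τ/∂λ_i. -/
open Complex

namespace GTaux

/-- General term of a theta series with characteristic `a`, differentiated `n` times. -/
noncomputable def tm (a : ℝ) (n : ℕ) (k : ℤ) (p : ℂ × ℂ) : ℂ :=
  ((k : ℂ) + (a : ℂ)) ^ n * Complex.exp ((Real.pi : ℂ) * Complex.I * p.2 * ((k : ℂ) + (a : ℂ)) ^ 2
      + 2 * (Real.pi : ℂ) * Complex.I * p.1 * ((k : ℂ) + (a : ℂ)))

noncomputable def Th (a : ℝ) (n : ℕ) (p : ℂ × ℂ) : ℂ := ∑' k : ℤ, tm a n k p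

/-- Uniform bound. -/
noncomputable def bd (a : ℝ) (S T : ℝ) (n : ℕ) (k : ℤ) : ℝ :=
  |(k : ℝ) + a| ^ n * Real.exp (-Real.pi * (T * ((k : ℝ) + a) ^ 2 - 2 * S * |(k : ℝ) + a|))

lemma norm_tm (a : ℝ) (n : ℕ) (k : ℤ) (p : ℂ × ℂ) :
    ‖tm a n k p‖ = |(k : ℝ) + a| ^ n *
      Real.exp (-Real.pi * (p.2.im * ((k : ℝ) + a) ^ 2 + 2 * p.1.im * ((k : ℝ) + a))) := by
  have h : ((k : ℂ) + (a : ℂ)) = (((k : ℝ) + a : ℝ) : ℂ) := by push_cast; rfl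
  rw [tm, norm_mul, norm_pow, h, Complex.norm_real, Real.norm_eq_abs, Complex.norm_exp]
  congr 2
  generalize (k : ℝ) + a = r
  have : (Real.pi : ℂ) * Complex.I * p.2 * (r : ℂ) ^ 2 + 2 * (Real.pi : ℂ) * Complex.I * p.1 * (r : ℂ)
    = ((Real.pi * r ^ 2 : ℝ) : ℂ) * (p.2 * Complex.I) + ((2 * Real.pi * r : ℝ) : ℂ) * (p.1 * Complex.I) := by
    push_cast; ring
  rw [this, Complex.add_re, Complex.re_ofReal_mul, Complex.re_ofReal_mul, Complex.mul_I_re,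
    Complex.mul_I_re]
  ring

lemma norm_tm_le (a : ℝ) {S T : ℝ} (n : ℕ) (k : ℤ) (p : ℂ × ℂ)
    (hS : |p.1.im| ≤ S) (hT : T ≤ p.2.im) : ‖tm a n k p‖ ≤ bd a S T n k := by
  rw [norm_tm, bd]
  apply mul_le_mul_of_nonneg_left _ (by positivity)
  apply Real.exp_le_exp.mpr
  generalize (k : ℝ) + a = r
  have h1 : T * r ^ 2 ≤ p.2.im * r ^ 2 := mul_le_mul_of_nonneg_right hT (sq_nonneg r)
  have h2 : -(S * |r|) ≤ p.1.im * r := by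
    have : |p.1.im * r| ≤ S * |r| := by
      rw [abs_mul]; exact mul_le_mul_of_nonneg_right hS (abs_nonneg r)
    exact (abs_le.mp this).1
  have h3 : T * r ^ 2 - 2 * S * |r| ≤ p.2.im * r ^ 2 + 2 * p.1.im * r := by linarith
  have := mul_le_mul_of_nonneg_left h3 Real.pi_pos.le
  linarith

lemma summable_bd (a : ℝ) (ha : |a| ≤ 1/2) (S : ℝ) {T : ℝ} (hS : 0 ≤ S) (hT : 0 < T) (n : ℕ) :
    Summable (bd a S T n) := by
  have h0 := summable_pow_mul_jacobiTheta₂_term_bound (S + T/2) hT 0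
  have hn := summable_pow_mul_jacobiTheta₂_term_bound (S + T/2) hT n
  refine Summable.of_nonneg_of_le (fun k => by unfold bd; positivity) (fun k => ?_)
    ((hn.add h0).mul_left (2 ^ n * Real.exp (2 * Real.pi * S)))
  have hak : |(k : ℝ) + a| ≤ |(k : ℝ)| + 1 := by
    have := abs_add_le (k : ℝ) a; linarith
  have hp : |(k : ℝ) + a| ^ n ≤ 2 ^ n * (|(k : ℝ)| ^ n + 1) := by
    rcases eq_or_ne k 0 with rfl | hk
    · have : |((0 : ℤ) : ℝ) + a| ^ n ≤ 1 := by
        apply pow_le_one₀ (abs_nonneg _)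
        simp only [Int.cast_zero, zero_add]; linarith
      have h2 : (1 : ℝ) ≤ 2 ^ n := one_le_pow₀ (by norm_num)
      have h3 : (0 : ℝ) ≤ |((0 : ℤ) : ℝ)| ^ n := by positivity
      nlinarith
    · have h1 : (1 : ℝ) ≤ |(k : ℝ)| := by exact_mod_cast Int.one_le_abs hk
      calc |(k : ℝ) + a| ^ n ≤ (2 * |(k : ℝ)|) ^ n :=
            pow_le_pow_left₀ (abs_nonneg _) (by linarith) n
        _ = 2 ^ n * |(k : ℝ)| ^ n := mul_pow _ _ _
        _ ≤ _ := by apply mul_le_mul_of_nonneg_left _ (by positivity); linarith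
  have he : -Real.pi * (T * ((k : ℝ) + a) ^ 2 - 2 * S * |(k : ℝ) + a|)
      ≤ 2 * Real.pi * S + -Real.pi * (T * (k : ℝ) ^ 2 - 2 * (S + T/2) * |(k : ℝ)|) := by
    have h1 : (k : ℝ) ^ 2 - |(k : ℝ)| ≤ ((k : ℝ) + a) ^ 2 := by
      have : -(|(k : ℝ)| * (1/2)) ≤ (k : ℝ) * a := by
        have h : |(k : ℝ) * a| ≤ |(k : ℝ)| * (1/2) := by
          rw [abs_mul]; exact mul_le_mul_of_nonneg_left ha (abs_nonneg _)
        exact (abs_le.mp h).1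
      nlinarith [sq_nonneg a]
    have h2 := mul_le_mul_of_nonneg_left h1 hT.le
    have h3 := mul_le_mul_of_nonneg_left hak hS
    have h4 : T * (k : ℝ) ^ 2 - 2 * (S + T/2) * |(k : ℝ)| - 2 * S
       ≤ T * ((k : ℝ) + a) ^ 2 - 2 * S * |(k : ℝ) + a| := by linarith
    have := mul_le_mul_of_nonneg_left h4 Real.pi_pos.le
    linarith
  unfold bd
  calc _ ≤ (2 ^ n * (|(k : ℝ)| ^ n + 1)) * (Real.exp (2 * Real.pi * S) *
        Real.exp (-Real.pi * (T * (k : ℝ) ^ 2 - 2 * (S + T/2) * |(k : ℝ)|))) := by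
        apply mul_le_mul hp _ (Real.exp_nonneg _) (by positivity)
        rw [← Real.exp_add]; exact Real.exp_le_exp.mpr he
    _ = _ := by push_cast; ring

lemma summable_tm (a : ℝ) (ha : |a| ≤ 1/2) (n : ℕ) (p : ℂ × ℂ) (hp : 0 < p.2.im) :
    Summable (fun k : ℤ => ‖tm a n k p‖) :=
  Summable.of_nonneg_of_le (fun _ => norm_nonneg _)
    (fun k => norm_tm_le a n k p le_rfl le_rfl) (summable_bd a ha _ (abs_nonneg _) hp n)

/-- The differential `c du + d dτ`. -/
noncomputable def dl (c d : ℂ) : ℂ × ℂ →L[ℂ] ℂ :=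
  c • ContinuousLinearMap.fst ℂ ℂ ℂ + d • ContinuousLinearMap.snd ℂ ℂ ℂ

lemma dl_apply (c d : ℂ) (q : ℂ × ℂ) : dl c d q = c * q.1 + d * q.2 := by
  simp [dl]

lemma norm_dl_le (c d : ℂ) : ‖dl c d‖ ≤ ‖c‖ + ‖d‖ := by
  refine ContinuousLinearMap.opNorm_le_bound _ (by positivity) (fun q => ?_)
  rw [dl_apply]
  calc _ ≤ ‖c * q.1‖ + ‖d * q.2‖ := norm_add_le _ _
    _ = ‖c‖ * ‖q.1‖ + ‖d‖ * ‖q.2‖ := by rw [norm_mul, norm_mul]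
    _ ≤ ‖c‖ * ‖q‖ + ‖d‖ * ‖q‖ := by
      gcongr
      · exact norm_fst_le q
      · exact norm_snd_le q
    _ = _ := by ring

lemma hasFDerivAt_tm (a : ℝ) (n : ℕ) (k : ℤ) (p : ℂ × ℂ) :
    HasFDerivAt (tm a n k) (dl (2 * (Real.pi : ℂ) * Complex.I * tm a (n+1) k p)
      ((Real.pi : ℂ) * Complex.I * tm a (n+2) k p)) p := by
  have h1 : HasFDerivAt (fun q : ℂ × ℂ => q.1) (ContinuousLinearMap.fst ℂ ℂ ℂ) p := hasFDerivAt_fst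
  have h2 : HasFDerivAt (fun q : ℂ × ℂ => q.2) (ContinuousLinearMap.snd ℂ ℂ ℂ) p := hasFDerivAt_snd
  have h := ((((h2.const_mul ((Real.pi : ℂ) * Complex.I)).mul_const (((k : ℂ) + (a : ℂ)) ^ 2)).add
    ((h1.const_mul (2 * (Real.pi : ℂ) * Complex.I)).mul_const ((k : ℂ) + (a : ℂ)))).cexp).const_mul
      (((k : ℂ) + (a : ℂ)) ^ n)
  refine h.congr_fderiv ?_
  ext <;> simp [dl, tm] <;> ring

lemma hasFDerivAt_Th (a : ℝ) (ha : |a| ≤ 1/2) (n : ℕ) (p : ℂ × ℂ) (hp : 0 < p.2.im) :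
    HasFDerivAt (Th a n) (dl (2 * (Real.pi : ℂ) * Complex.I * Th a (n+1) p)
      ((Real.pi : ℂ) * Complex.I * Th a (n+2) p)) p := by
  obtain ⟨T, hT0, hT⟩ := exists_between hp
  obtain ⟨S, hS⟩ := exists_gt |p.1.im|
  have hS0 : 0 ≤ S := (abs_nonneg _).trans hS.le
  let V : Set (ℂ × ℂ) := {q | |q.1.im| < S ∧ T < q.2.im}
  have hVo : IsOpen V := by
    apply IsOpen.inter
    · exact isOpen_lt (f := fun q : ℂ × ℂ => |q.1.im|) (by fun_prop) continuous_const
    · exact isOpen_lt (g := fun q : ℂ × ℂ => q.2.im) continuous_const (by fun_prop)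
  have hVc : Convex ℝ V := by
    rintro q ⟨hq1, hq2⟩ r ⟨hr1, hr2⟩ s t hs ht hst
    have hs' : s = 1 - t := by linarith
    rw [abs_lt] at hq1 hr1
    have key : ∀ A B c : ℝ, A < c → B < c → s * A + t * B < c := by
      intro A B c hA hB
      subst hs'
      rcases eq_or_lt_of_le ht with h | h
      · subst h; linarith
      · nlinarith [mul_lt_mul_of_pos_left hB h, mul_le_mul_of_nonneg_left hA.le hs]
    refine ⟨?_, ?_⟩
    · rw [abs_lt]
      constructor
      · have := key (-q.1.im) (-r.1.im) S (by linarith) (by linarith)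
        simp; linarith
      · simpa using key _ _ _ hq1.2 hr1.2
    · have := key (-q.2.im) (-r.2.im) (-T) (by linarith) (by linarith)
      simp; linarith
  have hsum : Summable (fun k => 2 * Real.pi * bd a S T (n+1) k + Real.pi * bd a S T (n+2) k) :=
    ((summable_bd a ha S hS0 hT0 (n+1)).mul_left _).add ((summable_bd a ha S hS0 hT0 (n+2)).mul_left _)
  have hpV : p ∈ V := ⟨hS, hT⟩
  have h := hasFDerivAt_tsum_of_isPreconnected (𝕜 := ℂ) (f := tm a n)
    (f' := fun k q => dl (2 * (Real.pi : ℂ) * Complex.I * tm a (n+1) k q)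
      ((Real.pi : ℂ) * Complex.I * tm a (n+2) k q)) hsum hVo hVc.isPreconnected
    (fun k q _ => hasFDerivAt_tm a n k q)
    (fun k q hq => by
      refine (norm_dl_le _ _).trans ?_
      have e1 := norm_tm_le a (n+1) k q hq.1.le hq.2.le
      have e2 := norm_tm_le a (n+2) k q hq.1.le hq.2.le
      simp only [norm_mul, Complex.norm_I, Complex.norm_real, Real.norm_eq_abs,
        abs_of_pos Real.pi_pos, Complex.norm_ofNat, mul_one]
      gcongr) hpV (summable_tm a ha n p hp).of_norm hpV
  refine h.congr_fderiv ?_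
  have s1 := (summable_tm a ha (n+1) p hp).of_norm.hasSum.mul_left (2 * (Real.pi : ℂ) * Complex.I)
  have s2 := (summable_tm a ha (n+2) p hp).of_norm.hasSum.mul_left ((Real.pi : ℂ) * Complex.I)
  have := (s1.smul_const (ContinuousLinearMap.fst ℂ ℂ ℂ)).add
    (s2.smul_const (ContinuousLinearMap.snd ℂ ℂ ℂ))
  exact this.tsum_eq

lemma tsum_split {ι κ : Type*} (f : ι → ℂ) (g h : κ → ι) (hg : Function.Injective g)
    (hh : Function.Injective h) (hc : IsCompl (Set.range g) (Set.range h)) (hf : Summable f) :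
    ∑' i, f i = ∑' k, f (g k) + ∑' k, f (h k) := by
  have h1 := hg.hasSum_range_iff.2 (hf.comp_injective hg).hasSum
  have h2 := hh.hasSum_range_iff.2 (hf.comp_injective hh).hasSum
  exact (h1.add_isCompl hc h2).tsum_eq

lemma isCompl_of {ι κ : Type*} (g h : κ → ι) (hd : ∀ a b, g a ≠ h b)
    (hs : ∀ i, (∃ a, g a = i) ∨ ∃ a, h a = i) : IsCompl (Set.range g) (Set.range h) := by
  constructor
  · rw [Set.disjoint_left]
    rintro _ ⟨a, rfl⟩ ⟨b, hb⟩
    exact hd a b hb.symm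
  · rw [codisjoint_iff_le_sup]
    intro i _
    exact hs i

lemma Th_mul (a b : ℝ) (ha : |a| ≤ 1/2) (hb : |b| ≤ 1/2) (p q : ℂ × ℂ) (hp : 0 < p.2.im)
    (hq : 0 < q.2.im) :
    Th a 0 p * Th b 0 q = ∑' z : ℤ × ℤ, tm a 0 z.1 p * tm b 0 z.2 q :=
  tsum_mul_tsum_of_summable_norm (summable_tm a ha 0 p hp) (summable_tm b hb 0 q hq)

lemma Th_mul_split (a b : ℝ) (ha : |a| ≤ 1/2) (hb : |b| ≤ 1/2) (p q : ℂ × ℂ) (hp : 0 < p.2.im)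
    (hq : 0 < q.2.im) (g h : ℤ × ℤ → ℤ × ℤ) (hg : Function.Injective g)
    (hh : Function.Injective h) (hc : IsCompl (Set.range g) (Set.range h)) :
    Th a 0 p * Th b 0 q = ∑' z : ℤ × ℤ, tm a 0 (g z).1 p * tm b 0 (g z).2 q
      + ∑' z : ℤ × ℤ, tm a 0 (h z).1 p * tm b 0 (h z).2 q := by
  rw [Th_mul a b ha hb p q hp hq]
  have hs : Summable (fun z : ℤ × ℤ => tm a 0 z.1 p * tm b 0 z.2 q) :=
    summable_mul_of_summable_norm (f := fun k => tm a 0 k p) (g := fun k => tm b 0 k q)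
      (summable_tm a ha 0 p hp) (summable_tm b hb 0 q hq)
  exact tsum_split (fun z : ℤ × ℤ => tm a 0 z.1 p * tm b 0 z.2 q) g h hg hh hc hs

lemma half_le : |(1/2 : ℝ)| ≤ 1/2 := by norm_num [abs_of_pos]
lemma quarter_le : |(1/4 : ℝ)| ≤ 1/2 := by rw [abs_of_pos] <;> norm_num
lemma zero_le' : |(0 : ℝ)| ≤ 1/2 := by simp

noncomputable def ph (x τ : ℂ) : ℂ := Th (1/4) 0 (2 * x, 2 * τ)

lemma im_two (τ : ℂ) (h : 0 < τ.im) : 0 < (2 * τ).im := by simp [h]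
lemma im_half (τ : ℂ) (h : 0 < τ.im) : 0 < (τ / 2).im := by
  have : (τ / 2).im = τ.im / 2 := by simp
  rw [this]; linarith

lemma L2 (x τ : ℂ) (h : 0 < τ.im) : Th (1/2) 0 (x, τ / 2) = ph x τ + ph (-x) τ := by
  unfold ph Th
  rw [tsum_split _ (fun a : ℤ => 2 * a) (fun a : ℤ => -2 * a - 1)
    (fun a b hab => by simp only at hab; omega) (fun a b hab => by simp only at hab; omega)
    (isCompl_of _ _ (fun a b => by omega)
      (fun i => by
        rcases Int.even_or_odd' i with ⟨k, hk | hk⟩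
        · exact Or.inl ⟨k, hk.symm⟩
        · exact Or.inr ⟨-k-1, by omega⟩))
    (summable_tm _ half_le 0 _ (im_half τ h)).of_norm]
  congr 1 <;>
  · refine tsum_congr (fun k => ?_)
    simp only [tm, pow_zero, one_mul]
    congr 1
    push_cast
    ring

lemma L1 (x y τ : ℂ) (h : 0 < τ.im) : Th (1/2) 0 (x + y, τ) * Th 0 0 (x - y, τ)
    = ph x τ * ph y τ + ph (-x) τ * ph (-y) τ := by
  unfold ph
  rw [Th_mul_split _ _ half_le zero_le' _ _ h h (fun z => (z.1 + z.2, z.1 - z.2))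
    (fun z => (-z.1 - z.2 - 1, z.2 - z.1))
    (fun a b hab => by simp only [Prod.mk.injEq] at hab; ext <;> omega)
    (fun a b hab => by simp only [Prod.mk.injEq] at hab; ext <;> omega)
    (isCompl_of _ _ (fun a b => by simp only [ne_eq, Prod.mk.injEq]; omega)
      (fun i => by
        rcases Int.even_or_odd' (i.1 + i.2) with ⟨k, hk | hk⟩
        · exact Or.inl ⟨(k, i.1 - k), by ext <;> simp only <;> omega⟩
        · exact Or.inr ⟨(-k-1, k - i.1), by ext <;> simp only <;> omega⟩)),
    Th_mul _ _ quarter_le quarter_le _ _ (im_two τ h) (im_two τ h),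
    Th_mul _ _ quarter_le quarter_le _ _ (im_two τ h) (im_two τ h)]
  congr 1 <;>
  · refine tsum_congr (fun k => ?_)
    simp only [tm, pow_zero, one_mul, ← Complex.exp_add]
    congr 1
    push_cast
    ring

lemma L3 (x y τ : ℂ) (h : 0 < τ.im) : Th (1/2) 0 (x, τ / 2) * Th (1/2) 0 (y, τ / 2)
    = Th 0 0 (x + y, τ) * Th (1/2) 0 (x - y, τ) + Th (1/2) 0 (x + y, τ) * Th 0 0 (x - y, τ) := by
  rw [Th_mul_split _ _ half_le half_le _ _ (im_half τ h) (im_half τ h)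
    (fun z => (z.1 + z.2, z.1 - z.2 - 1)) (fun z => (z.1 + z.2, z.1 - z.2))
    (fun a b hab => by simp only [Prod.mk.injEq] at hab; ext <;> omega)
    (fun a b hab => by simp only [Prod.mk.injEq] at hab; ext <;> omega)
    (isCompl_of _ _ (fun a b => by simp only [ne_eq, Prod.mk.injEq]; omega)
      (fun i => by
        rcases Int.even_or_odd' (i.1 + i.2) with ⟨k, hk | hk⟩
        · exact Or.inr ⟨(k, i.1 - k), by ext <;> simp only <;> omega⟩
        · exact Or.inl ⟨(k + 1, i.1 - k - 1), by ext <;> simp only <;> omega⟩)),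
    Th_mul _ _ zero_le' half_le _ _ h h, Th_mul _ _ half_le zero_le' _ _ h h]
  congr 1 <;>
  · refine tsum_congr (fun k => ?_)
    simp only [tm, pow_zero, one_mul, ← Complex.exp_add]
    congr 1
    push_cast
    ring

lemma Th0_add_one (n : ℕ) (x τ : ℂ) : Th 0 n (x + 1, τ) = Th 0 n (x, τ) := by
  unfold Th
  refine tsum_congr (fun k => ?_)
  simp only [tm]
  congr 1
  have : (Real.pi : ℂ) * Complex.I * τ * ((k : ℂ) + ((0:ℝ) : ℂ)) ^ 2
      + 2 * (Real.pi : ℂ) * Complex.I * (x + 1) * ((k : ℂ) + ((0:ℝ) : ℂ))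
    = (Real.pi : ℂ) * Complex.I * τ * ((k : ℂ) + ((0:ℝ) : ℂ)) ^ 2
      + 2 * (Real.pi : ℂ) * Complex.I * x * ((k : ℂ) + ((0:ℝ) : ℂ)) + k * (2 * Real.pi * Complex.I) := by
    push_cast; ring
  rw [this, Complex.exp_add, Complex.exp_int_mul_two_pi_mul_I, mul_one]

lemma Thh_add_one (n : ℕ) (x τ : ℂ) : Th (1/2) n (x + 1, τ) = -Th (1/2) n (x, τ) := by
  unfold Th
  rw [← tsum_neg]
  refine tsum_congr (fun k => ?_)
  simp only [tm]
  rw [← mul_neg]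
  congr 1
  have : (Real.pi : ℂ) * Complex.I * τ * ((k : ℂ) + ((1/2:ℝ) : ℂ)) ^ 2
      + 2 * (Real.pi : ℂ) * Complex.I * (x + 1) * ((k : ℂ) + ((1/2:ℝ) : ℂ))
    = (Real.pi : ℂ) * Complex.I * τ * ((k : ℂ) + ((1/2:ℝ) : ℂ)) ^ 2
      + 2 * (Real.pi : ℂ) * Complex.I * x * ((k : ℂ) + ((1/2:ℝ) : ℂ)) + k * (2 * Real.pi * Complex.I)
      + Real.pi * Complex.I := by
    push_cast; ring
  rw [this, Complex.exp_add, Complex.exp_add, Complex.exp_int_mul_two_pi_mul_I, mul_one,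
    Complex.exp_pi_mul_I, mul_neg_one]

lemma ph_half (x τ : ℂ) : ph (x + 1/2) τ = Complex.I * ph x τ := by
  unfold ph Th
  rw [← tsum_mul_left]
  refine tsum_congr (fun k => ?_)
  simp only [tm, pow_zero, one_mul]
  have : (Real.pi : ℂ) * Complex.I * (2 * τ) * ((k : ℂ) + ((1/4:ℝ) : ℂ)) ^ 2
      + 2 * (Real.pi : ℂ) * Complex.I * (2 * (x + 1/2)) * ((k : ℂ) + ((1/4:ℝ) : ℂ))
    = (Real.pi : ℂ) * Complex.I * (2 * τ) * ((k : ℂ) + ((1/4:ℝ) : ℂ)) ^ 2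
      + 2 * (Real.pi : ℂ) * Complex.I * (2 * x) * ((k : ℂ) + ((1/4:ℝ) : ℂ)) + k * (2 * Real.pi * Complex.I)
      + Real.pi / 2 * Complex.I := by
    push_cast; ring
  rw [this, Complex.exp_add, Complex.exp_add, Complex.exp_int_mul_two_pi_mul_I, mul_one,
    Complex.exp_pi_div_two_mul_I, mul_comm]

lemma ph_neg_half (x τ : ℂ) : ph (-(x + 1/2)) τ = -Complex.I * ph (-x) τ := by
  have h := ph_half (-(x + 1/2)) τ
  have e : -(x + 1/2) + 1/2 = -x := by ring
  rw [e] at h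
  rw [h, ← mul_assoc]
  simp

lemma two_pi_I_ne : (2 * (Real.pi : ℂ) * Complex.I) ≠ 0 := by
  simp [Real.pi_ne_zero, Complex.I_ne_zero]

/-- `n`-th `u`-derivative of the theta function with characteristic `a`. -/
noncomputable def D (a : ℝ) (n : ℕ) (u τ : ℂ) : ℂ :=
  (2 * (Real.pi : ℂ) * Complex.I) ^ n * Th a n (u, τ)

lemma D_fderiv (a : ℝ) (ha : |a| ≤ 1/2) (n : ℕ) (u τ : ℂ) (h : 0 < τ.im) :
    HasFDerivAt (fun p : ℂ × ℂ => D a n p.1 p.2)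
      (dl (D a (n+1) u τ) (1 / (4 * (Real.pi : ℂ) * Complex.I) * D a (n+2) u τ)) (u, τ) := by
  have h1 := (hasFDerivAt_Th a ha n (u, τ) h).const_mul ((2 * (Real.pi : ℂ) * Complex.I) ^ n)
  refine h1.congr_fderiv ?_
  have hpi : (Real.pi : ℂ) ≠ 0 := by simp [Real.pi_ne_zero]
  have hI := Complex.I_ne_zero
  ext
  · simp [dl, D, pow_succ]; ring
  · simp [dl, D, pow_succ]; field_simp; ring_nf; rw [Complex.I_sq]; ring

lemma D_deriv (a : ℝ) (ha : |a| ≤ 1/2) (n : ℕ) (u τ : ℂ) (h : 0 < τ.im) :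
    HasDerivAt (fun v => D a n v τ) (D a (n+1) u τ) u := by
  have h1 : HasDerivAt (fun v : ℂ => (v, τ)) ((1 : ℂ), (0 : ℂ)) u :=
    (hasDerivAt_id u).prodMk (hasDerivAt_const u τ)
  have h2 := (D_fderiv a ha n u τ h).comp_hasDerivAt u h1
  simpa [dl_apply, Function.comp_def] using h2

noncomputable def A (n : ℕ) (u τ : ℂ) : ℂ := - D (1/2) n (u + 1/2) τ
noncomputable def B (n : ℕ) (u τ : ℂ) : ℂ := D 0 n (u + 1/2) τ

lemma theta1_eq (u τ : ℂ) : theta1 u τ = A 0 u τ := by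
  simp [theta1, A, D, Th, tm]

lemma theta4_eq (u τ : ℂ) : theta4 u τ = B 0 u τ := by
  simp [theta4, B, D, Th, tm]

lemma A_fderiv (n : ℕ) (u τ : ℂ) (h : 0 < τ.im) :
    HasFDerivAt (fun p : ℂ × ℂ => A n p.1 p.2)
      (dl (A (n+1) u τ) (1 / (4 * (Real.pi : ℂ) * Complex.I) * A (n+2) u τ)) (u, τ) := by
  have h0 : HasFDerivAt (fun p : ℂ × ℂ => p + (1/2, 0)) (ContinuousLinearMap.id ℂ (ℂ × ℂ)) (u, τ) :=
    (hasFDerivAt_id _).add_const _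
  have h1 := D_fderiv (1/2) half_le n (u + 1/2) τ h
  have e : ((u + 1/2, τ) : ℂ × ℂ) = (u, τ) + (1/2, 0) := by simp
  rw [e] at h1
  have h2 := (h1.comp (u, τ) h0).neg
  simp only [Function.comp_def, Prod.fst_add, Prod.snd_add, add_zero] at h2
  refine HasFDerivAt.congr_fderiv (f := fun p : ℂ × ℂ => A n p.1 p.2) h2 ?_
  ext <;> simp [dl, A]

lemma B_fderiv (n : ℕ) (u τ : ℂ) (h : 0 < τ.im) :
    HasFDerivAt (fun p : ℂ × ℂ => B n p.1 p.2)
      (dl (B (n+1) u τ) (1 / (4 * (Real.pi : ℂ) * Complex.I) * B (n+2) u τ)) (u, τ) := by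
  have h0 : HasFDerivAt (fun p : ℂ × ℂ => p + (1/2, 0)) (ContinuousLinearMap.id ℂ (ℂ × ℂ)) (u, τ) :=
    (hasFDerivAt_id _).add_const _
  have h1 := D_fderiv 0 zero_le' n (u + 1/2) τ h
  have e : ((u + 1/2, τ) : ℂ × ℂ) = (u, τ) + (1/2, 0) := by simp
  rw [e] at h1
  have h2 := (h1.comp (u, τ) h0)
  simp only [Function.comp_def, Prod.fst_add, Prod.snd_add, add_zero] at h2
  refine HasFDerivAt.congr_fderiv (f := fun p : ℂ × ℂ => B n p.1 p.2) h2 ?_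
  ext <;> simp [dl, B]

lemma A_deriv (n : ℕ) (u τ : ℂ) (h : 0 < τ.im) :
    HasDerivAt (fun v => A n v τ) (A (n+1) u τ) u := by
  have := (D_deriv (1/2) half_le n (u + 1/2) τ h).comp_add_const u (1/2)
  exact this.neg

lemma B_deriv (n : ℕ) (u τ : ℂ) (h : 0 < τ.im) :
    HasDerivAt (fun v => B n v τ) (B (n+1) u τ) u :=
  (D_deriv 0 zero_le' n (u + 1/2) τ h).comp_add_const u (1/2)

lemma D0 (a : ℝ) (u τ : ℂ) : D a 0 u τ = Th a 0 (u, τ) := by simp [D]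

lemma ph_diff (x τ : ℂ) (h : 0 < τ.im) : ∃ d, HasDerivAt (fun v => ph v τ) d x := by
  have h1 := D_deriv (1/4) quarter_le 0 (2 * x) (2 * τ) (im_two τ h)
  have h2 : HasDerivAt (fun v : ℂ => 2 * v) 2 x := by simpa using (hasDerivAt_id x).const_mul (2:ℂ)
  have h3 := h1.comp x h2
  simp only [Function.comp_def, D0] at h3
  exact ⟨_, h3⟩

lemma AB (x y τ : ℂ) (h : 0 < τ.im) : A 0 (x + y) τ * B 0 (x - y) τ
    = -Complex.I * (ph x τ * ph y τ - ph (-x) τ * ph (-y) τ) := by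
  have h1 := L1 (x + 1/2) y τ h
  rw [ph_half, ph_neg_half] at h1
  simp only [A, B, D0]
  have e1 : x + y + 1/2 = x + 1/2 + y := by ring
  have e2 : x - y + 1/2 = x + 1/2 - y := by ring
  rw [e1, e2, neg_mul, h1]
  ring

lemma P_eq (x τ : ℂ) (h : 0 < τ.im) :
    A 0 x (τ/2) = -Complex.I * (ph x τ - ph (-x) τ) := by
  have h1 := L2 (x + 1/2) τ h
  rw [ph_half, ph_neg_half] at h1
  simp only [A, D0]
  rw [h1]; ring

lemma PP (x y τ : ℂ) (h : 0 < τ.im) : A 0 x (τ/2) * A 0 y (τ/2)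
    = D 0 0 (x + y) τ * D (1/2) 0 (x - y) τ - D (1/2) 0 (x + y) τ * D 0 0 (x - y) τ := by
  have h1 := L3 (x + 1/2) (y + 1/2) τ h
  have e1 : x + 1/2 + (y + 1/2) = x + y + 1 := by ring
  have e2 : x + 1/2 - (y + 1/2) = x - y := by ring
  rw [e1, e2, Th0_add_one, Thh_add_one] at h1
  simp only [A, D0]
  linear_combination h1

lemma QQ (x y τ : ℂ) (h : 0 < τ.im) : D (1/2) 0 x (τ/2) * D (1/2) 0 y (τ/2)
    = D 0 0 (x + y) τ * D (1/2) 0 (x - y) τ + D (1/2) 0 (x + y) τ * D 0 0 (x - y) τ := by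
  simp only [D0]
  exact L3 x y τ h

noncomputable def V0 (x τ : ℂ) : ℂ := A 0 x τ * B 0 x τ
noncomputable def V1 (x τ : ℂ) : ℂ := A 1 x τ * B 0 x τ + A 0 x τ * B 1 x τ
noncomputable def V2 (x τ : ℂ) : ℂ := A 2 x τ * B 0 x τ + 2 * A 1 x τ * B 1 x τ + A 0 x τ * B 2 x τ
noncomputable def W0 (x τ : ℂ) : ℂ := A 1 x τ * B 0 x τ - A 0 x τ * B 1 x τ
noncomputable def W1 (x τ : ℂ) : ℂ := A 2 x τ * B 0 x τ - A 0 x τ * B 2 x τ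
noncomputable def W2 (x τ : ℂ) : ℂ :=
  A 3 x τ * B 0 x τ + A 2 x τ * B 1 x τ - A 1 x τ * B 2 x τ - A 0 x τ * B 3 x τ

lemma V0_deriv (x τ : ℂ) (h : 0 < τ.im) : HasDerivAt (fun v => V0 v τ) (V1 x τ) x :=
  ((A_deriv 0 x τ h).mul (B_deriv 0 x τ h))

lemma V1_deriv (x τ : ℂ) (h : 0 < τ.im) : HasDerivAt (fun v => V1 v τ) (V2 x τ) x := by
  have := ((A_deriv 1 x τ h).mul (B_deriv 0 x τ h)).add ((A_deriv 0 x τ h).mul (B_deriv 1 x τ h))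
  refine HasDerivAt.congr_deriv (f := fun v => V1 v τ) this ?_
  simp only [V2]; ring

lemma W0_deriv (x τ : ℂ) (h : 0 < τ.im) : HasDerivAt (fun v => W0 v τ) (W1 x τ) x := by
  have := ((A_deriv 1 x τ h).mul (B_deriv 0 x τ h)).sub ((A_deriv 0 x τ h).mul (B_deriv 1 x τ h))
  refine HasDerivAt.congr_deriv (f := fun v => W0 v τ) this ?_
  simp only [W1]; ring

lemma W1_deriv (x τ : ℂ) (h : 0 < τ.im) : HasDerivAt (fun v => W1 v τ) (W2 x τ) x := by
  have := ((A_deriv 2 x τ h).mul (B_deriv 0 x τ h)).sub ((A_deriv 0 x τ h).mul (B_deriv 2 x τ h))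
  refine HasDerivAt.congr_deriv (f := fun v => W1 v τ) this ?_
  simp only [W2]; ring

lemma V0_eq (x τ : ℂ) (h : 0 < τ.im) : V0 x τ = ph 0 τ * A 0 x (τ/2) := by
  have := AB x 0 τ h
  simp only [add_zero, sub_zero, neg_zero] at this
  rw [V0, this, P_eq x τ h]; ring

lemma V1_eq (x τ : ℂ) (h : 0 < τ.im) : V1 x τ = ph 0 τ * A 1 x (τ/2) := by
  have h1 := V0_deriv x τ h
  have h2 := (A_deriv 0 x (τ/2) (im_half τ h)).const_mul (ph 0 τ)
  have e : (fun v => V0 v τ) = fun v => ph 0 τ * A 0 v (τ/2) := funext (fun v => V0_eq v τ h)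
  rw [e] at h1
  exact h1.unique h2

lemma V0_neg (x τ : ℂ) (h : 0 < τ.im) : V0 (-x) τ = - V0 x τ := by
  rw [V0_eq _ _ h, V0_eq _ _ h, P_eq _ _ h, P_eq _ _ h, neg_neg]; ring

lemma V1_neg (x τ : ℂ) (h : 0 < τ.im) : V1 (-x) τ = V1 x τ := by
  have h1 := (V0_deriv (-x) τ h)
  have h2 := h1.comp x (hasDerivAt_neg x)
  have e : ((fun v => V0 v τ) ∘ fun v => -v) = fun v => - V0 v τ := funext (fun v => V0_neg v τ h)
  have h3 := (V0_deriv x τ h).neg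
  have h4 : HasDerivAt (fun v => - V0 v τ) (V1 (-x) τ * -1) x := by rw [← e]; exact h2
  have := h4.unique h3
  linear_combination -this

lemma W0_eq (x τ d : ℂ) (h : 0 < τ.im) (hd : HasDerivAt (fun v => ph v τ) d 0) :
    W0 x τ = -Complex.I * d * D (1/2) 0 x (τ/2) := by
  have a1 : HasDerivAt (fun y => A 0 (x + y) τ) (A 1 x τ) 0 := by
    have := A_deriv 0 (x + 0) τ h
    simpa using this.comp_const_add x 0
  have b1 : HasDerivAt (fun y => B 0 (x - y) τ) (-B 1 x τ) 0 := by
    have := B_deriv 0 (x - 0) τ h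
    simpa using this.comp_const_sub x 0
  have l := a1.mul b1
  have n1 : HasDerivAt (fun y => ph (-y) τ) (-d) 0 := by
    have hd' : HasDerivAt (fun v => ph v τ) d (-0) := by simpa using hd
    simpa [Function.comp_def] using hd'.comp 0 (hasDerivAt_neg 0)
  have r := ((hd.const_mul (ph x τ)).sub (n1.const_mul (ph (-x) τ))).const_mul (-Complex.I)
  have e : ((fun y => A 0 (x + y) τ) * fun y => B 0 (x - y) τ) = fun y =>
      -Complex.I * (ph x τ * ph y τ - ph (-x) τ * ph (-y) τ) := funext (fun y => AB x y τ h)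
  rw [e] at l
  have u := l.unique r
  simp only [add_zero, sub_zero] at u
  have q := L2 x τ h
  rw [D0, q, W0]
  linear_combination u

lemma W1_eq (x τ d : ℂ) (h : 0 < τ.im) (hd : HasDerivAt (fun v => ph v τ) d 0) :
    W1 x τ = -Complex.I * d * D (1/2) 1 x (τ/2) := by
  have h1 := W0_deriv x τ h
  have h2 := (D_deriv (1/2) half_le 0 x (τ/2) (im_half τ h)).const_mul (-Complex.I * d)
  have e : (fun v => W0 v τ) = fun v => -Complex.I * d * D (1/2) 0 v (τ/2) :=
    funext (fun v => W0_eq v τ d h hd)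
  rw [e] at h1
  exact h1.unique h2

lemma f0Q (x τ : ℂ) (h : 0 < τ.im) :
    ph 0 τ * D (1/2) 0 x (τ/2) = D (1/2) 0 x τ * D 0 0 x τ := by
  have h1 := QQ x 0 τ h
  have h2 := L2 0 τ h
  rw [← D0] at h2
  rw [h2] at h1
  simp only [add_zero, sub_zero, neg_zero] at h1
  linear_combination h1 / 2

lemma f0Q1 (x τ : ℂ) (h : 0 < τ.im) :
    ph 0 τ * D (1/2) 1 x (τ/2) = D (1/2) 1 x τ * D 0 0 x τ + D (1/2) 0 x τ * D 0 1 x τ := by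
  have h1 := (D_deriv (1/2) half_le 0 x (τ/2) (im_half τ h)).const_mul (ph 0 τ)
  have h2 := (D_deriv (1/2) half_le 0 x τ h).mul (D_deriv 0 zero_le' 0 x τ h)
  have e : (fun v => ph 0 τ * D (1/2) 0 v (τ/2)) =
    (fun v => D (1/2) 0 v τ) * (fun v => D 0 0 v τ) := funext (fun v => f0Q v τ h)
  rw [e] at h1
  exact h1.unique h2

lemma d0P (x τ d : ℂ) (h : 0 < τ.im) (hd : HasDerivAt (fun v => ph v τ) d 0) :
    -Complex.I * d * A 0 x (τ/2) =
      D (1/2) 0 x τ * D 0 1 x τ - D 0 0 x τ * D (1/2) 1 x τ := by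
  have n1 : HasDerivAt (fun y => ph (-y) τ) (-d) 0 := by
    have hd' : HasDerivAt (fun v => ph v τ) d (-0) := by simpa using hd
    simpa [Function.comp_def] using hd'.comp 0 (hasDerivAt_neg 0)
  have l := ((hd.sub n1).const_mul (-Complex.I)).const_mul (A 0 x (τ/2))
  have p (a : ℝ) (ha : |a| ≤ 1/2) : HasDerivAt (fun y => D a 0 (x + y) τ) (D a 1 x τ) 0 := by
    have := D_deriv a ha 0 (x + 0) τ h
    simpa using this.comp_const_add x 0
  have m (a : ℝ) (ha : |a| ≤ 1/2) : HasDerivAt (fun y => D a 0 (x - y) τ) (-D a 1 x τ) 0 := by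
    have := D_deriv a ha 0 (x - 0) τ h
    simpa using this.comp_const_sub x 0
  have r := ((p 0 zero_le').mul (m (1/2) half_le)).sub ((p (1/2) half_le).mul (m 0 zero_le'))
  have e : (fun y => A 0 x (τ/2) * (-Complex.I * (ph y τ - ph (-y) τ))) =
      ((fun y => D 0 0 (x + y) τ) * (fun y => D (1/2) 0 (x - y) τ)
      - (fun y => D (1/2) 0 (x + y) τ) * (fun y => D 0 0 (x - y) τ)) := by
    funext y
    rw [← P_eq y τ h]
    exact PP x y τ h
  have l' : HasDerivAt (fun y => A 0 x (τ/2) * (-Complex.I * (ph y τ - ph (-y) τ))) _ 0 := l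
  rw [e] at l'
  have u := l'.unique r
  simp only [add_zero, sub_zero] at u
  linear_combination u / 2

lemma PP1 (x y τ : ℂ) (h : 0 < τ.im) :
    A 1 x (τ/2) * A 0 y (τ/2) + A 0 x (τ/2) * A 1 y (τ/2)
    = 2 * (D 0 1 (x + y) τ * D (1/2) 0 (x - y) τ - D (1/2) 1 (x + y) τ * D 0 0 (x - y) τ) := by
  have p (x : ℂ) : HasDerivAt (fun t => A 0 (x + t) (τ/2)) (A 1 x (τ/2)) 0 := by
    have := A_deriv 0 (x + 0) (τ/2) (im_half τ h)
    simpa using this.comp_const_add x 0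
  have q (a : ℝ) (ha : |a| ≤ 1/2) :
      HasDerivAt (fun t => D a 0 (x + y + 2 * t) τ) (D a 1 (x + y) τ * 2) 0 := by
    have h1 : HasDerivAt (fun t : ℂ => x + y + 2 * t) 2 0 := by
      simpa using ((hasDerivAt_id (0:ℂ)).const_mul (2:ℂ)).const_add (x + y)
    have := (D_deriv a ha 0 (x + y + 2 * 0) τ h).comp 0 h1
    simpa [Function.comp_def] using this
  have l := (p x).mul (p y)
  have r := ((q 0 zero_le').mul_const (D (1/2) 0 (x - y) τ)).sub
    ((q (1/2) half_le).mul_const (D 0 0 (x - y) τ))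
  have e : ((fun t => A 0 (x + t) (τ/2)) * fun t => A 0 (y + t) (τ/2)) =
      ((fun t => D 0 0 (x + y + 2 * t) τ * D (1/2) 0 (x - y) τ) -
        fun t => D (1/2) 0 (x + y + 2 * t) τ * D 0 0 (x - y) τ) := by
    funext t
    have := PP (x + t) (y + t) τ h
    have e1 : x + t + (y + t) = x + y + 2 * t := by ring
    have e2 : x + t - (y + t) = x - y := by ring
    rw [e1, e2] at this
    exact this
  rw [e] at l
  have u := l.unique r
  simp only [add_zero] at u
  linear_combination u

/-- The key addition formula. -/
lemma key0 (x y τ : ℂ) (h : 0 < τ.im) :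
    W0 x τ * W0 y τ * V0 (x + y) τ + W1 (x + y) τ * V0 x τ * V0 y τ
      = W0 (x + y) τ * (V1 x τ * V0 y τ + V0 x τ * V1 y τ) := by
  obtain ⟨d, hd⟩ := ph_diff 0 τ h
  simp only [W0_eq _ τ d h hd, W1_eq _ τ d h hd, V0_eq _ τ h, V1_eq _ τ h]
  have a1 := f0Q (x + y) τ h
  have a2 := f0Q1 (x + y) τ h
  have a3 := d0P (x + y) τ d h hd
  have b1 := PP x y τ h
  have b2 := QQ x y τ h
  have b3 := PP1 x y τ h
  generalize D (1/2) 0 (x + y) (τ/2) = q at *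
  generalize D (1/2) 1 (x + y) (τ/2) = q1 at *
  generalize A 0 (x + y) (τ/2) = p at *
  generalize D (1/2) 0 x (τ/2) = qx at *
  generalize D (1/2) 0 y (τ/2) = qy at *
  generalize A 0 x (τ/2) = px at *
  generalize A 0 y (τ/2) = py at *
  generalize A 1 x (τ/2) = px1 at *
  generalize A 1 y (τ/2) = py1 at *
  generalize ph 0 τ = f at *
  generalize D (1/2) 0 (x + y) τ = α at *
  generalize D (1/2) 1 (x + y) τ = α1 at *
  generalize D 0 0 (x + y) τ = β at *
  generalize D 0 1 (x + y) τ = β1 at *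
  generalize D (1/2) 0 (x - y) τ = αw at *
  generalize D 0 0 (x - y) τ = βw at *
  generalize -Complex.I * d = c at *
  have main : c * p * (qx * qy) + f * q1 * (px * py) = f * q * (px1 * py + px * py1) := by
    rw [a3, a2, a1, b1, b2, b3]; ring
  linear_combination c * f * main

lemma key1 (x y τ : ℂ) (h : 0 < τ.im) :
    W0 x τ * (W1 y τ * V0 (x + y) τ + W0 y τ * V1 (x + y) τ)
      + W2 (x + y) τ * V0 x τ * V0 y τ + W1 (x + y) τ * V0 x τ * V1 y τ
      = W1 (x + y) τ * (V1 x τ * V0 y τ + V0 x τ * V1 y τ)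
        + W0 (x + y) τ * (V1 x τ * V1 y τ + V0 x τ * V2 y τ) := by
  have v0 := (V0_deriv (x + y) τ h).comp_const_add x y
  have w0 := (W0_deriv (x + y) τ h).comp_const_add x y
  have w1 := (W1_deriv (x + y) τ h).comp_const_add x y
  have l := (((W0_deriv y τ h).const_mul (W0 x τ)).mul v0).add
    ((w1.mul_const (V0 x τ)).mul (V0_deriv y τ h))
  have r := w0.mul (((V0_deriv y τ h).const_mul (V1 x τ)).add ((V1_deriv y τ h).const_mul (V0 x τ)))
  have e := l.congr_of_eventuallyEq (f₁ := fun y => W0 (x + y) τ * (V1 x τ * V0 y τ + V0 x τ * V1 y τ))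
    (Filter.Eventually.of_forall (fun y => (key0 x y τ h).symm))
  have u := e.unique r
  simp only [Pi.add_apply] at u
  linear_combination u

lemma zeta1_eq (u τ : ℂ) (h : 0 < τ.im) : zeta1 u τ = A 1 u τ / A 0 u τ := by
  have : (fun v => theta1 v τ) = fun v => A 0 v τ := funext (fun v => theta1_eq v τ)
  rw [zeta1, this, (A_deriv 0 u τ h).deriv, theta1_eq]

lemma zeta4_eq (u τ : ℂ) (h : 0 < τ.im) : zeta4 u τ = B 1 u τ / B 0 u τ := by
  have : (fun v => theta4 v τ) = fun v => B 0 v τ := funext (fun v => theta4_eq v τ)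
  rw [zeta4, this, (B_deriv 0 u τ h).deriv, theta4_eq]

lemma Sp_eq (u τ : ℂ) (h : 0 < τ.im) :
    Sp u τ = A 1 u τ / A 0 u τ - B 1 u τ / B 0 u τ := by
  rw [Sp, zeta1_eq u τ h, zeta4_eq u τ h]

noncomputable def Su (u τ : ℂ) : ℂ :=
  (A 2 u τ * A 0 u τ - A 1 u τ * A 1 u τ) / A 0 u τ ^ 2
    - (B 2 u τ * B 0 u τ - B 1 u τ * B 1 u τ) / B 0 u τ ^ 2

noncomputable def St (u τ : ℂ) : ℂ :=
  1 / (4 * (Real.pi : ℂ) * Complex.I) * ((A 3 u τ * A 0 u τ - A 1 u τ * A 2 u τ) / A 0 u τ ^ 2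
    - (B 3 u τ * B 0 u τ - B 1 u τ * B 2 u τ) / B 0 u τ ^ 2)

lemma hasFDerivAt_div' {f g : ℂ × ℂ → ℂ} {p : ℂ × ℂ} {a b c d : ℂ}
    (hf : HasFDerivAt f (dl a b) p) (hg : HasFDerivAt g (dl c d) p) (h : g p ≠ 0) :
    HasFDerivAt (fun q => f q / g q)
      (dl ((a * g p - f p * c) / g p ^ 2) ((b * g p - f p * d) / g p ^ 2)) p := by
  have h1 : HasFDerivAt (fun q => (g q)⁻¹) _ p := (hasFDerivAt_inv h).comp p hg
  have h2 := hf.mul h1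
  have e : (fun q => f q / g q) = f * fun q => (g q)⁻¹ := by
    funext q; simp [div_eq_mul_inv]
  rw [e]
  refine h2.congr_fderiv ?_
  ext
  · simp [dl]; field_simp; ring
  · simp [dl]; field_simp; ring

lemma Sp_fderiv (u τ : ℂ) (h : 0 < τ.im) (hA : A 0 u τ ≠ 0) (hB : B 0 u τ ≠ 0) :
    HasFDerivAt (fun p : ℂ × ℂ => Sp p.1 p.2) (dl (Su u τ) (St u τ)) (u, τ) := by
  have a := hasFDerivAt_div' (A_fderiv 1 u τ h) (A_fderiv 0 u τ h) hA
  have b := hasFDerivAt_div' (B_fderiv 1 u τ h) (B_fderiv 0 u τ h) hB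
  have hopen : IsOpen {p : ℂ × ℂ | 0 < p.2.im} :=
    isOpen_lt continuous_const (by fun_prop : Continuous (fun p : ℂ × ℂ => p.2.im))
  have hev : (fun p : ℂ × ℂ => Sp p.1 p.2) =ᶠ[nhds (u, τ)]
      ((fun p : ℂ × ℂ => A 1 p.1 p.2 / A 0 p.1 p.2) - fun p : ℂ × ℂ => B 1 p.1 p.2 / B 0 p.1 p.2) := by
    filter_upwards [hopen.mem_nhds (show (u, τ) ∈ {p : ℂ × ℂ | 0 < p.2.im} from h)] with p hp
    exact Sp_eq p.1 p.2 hp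
  refine ((a.sub b).congr_of_eventuallyEq hev).congr_fderiv ?_
  ext
  · simp [dl, Su]
  · simp [dl, St]; ring

lemma Spp_eq (u τ : ℂ) (h : 0 < τ.im) (hA : A 0 u τ ≠ 0) (hB : B 0 u τ ≠ 0) :
    Spp u τ = Su u τ := by
  have h1 : HasDerivAt (fun v : ℂ => (v, τ)) ((1 : ℂ), (0 : ℂ)) u :=
    (hasDerivAt_id u).prodMk (hasDerivAt_const u τ)
  have h2 := (Sp_fderiv u τ h hA hB).comp_hasDerivAt u h1
  have h3 : HasDerivAt (fun v => Sp v τ) (Su u τ) u := by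
    simpa [dl_apply, Function.comp_def] using h2
  exact h3.deriv

lemma zeta_half (u τ : ℂ) (h : 0 < τ.im) (hf : ph 0 τ ≠ 0) :
    zeta1 u (τ/2) = V1 u τ / V0 u τ := by
  rw [zeta1_eq u (τ/2) (im_half τ h), V1_eq u τ h, V0_eq u τ h, mul_div_mul_left _ _ hf]

lemma wp_half (u τ : ℂ) (h : 0 < τ.im) (hf : ph 0 τ ≠ 0) (hV : V0 u τ ≠ 0) :
    wp1 u (τ/2) = - ((V2 u τ * V0 u τ - V1 u τ * V1 u τ) / V0 u τ ^ 2) := by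
  have e : (fun v => zeta1 v (τ/2)) = fun v => V1 v τ / V0 v τ :=
    funext (fun v => zeta_half v τ h hf)
  rw [wp1, e]
  have := ((V1_deriv u τ h).fun_div (V0_deriv u τ h) hV).deriv
  rw [this]

/-- The functional identity behind the theorem. -/
lemma main_id (u v τ : ℂ) (h : 0 < τ.im) (hAu : A 0 u τ ≠ 0) (hBu : B 0 u τ ≠ 0)
    (hAv : A 0 v τ ≠ 0) (hBv : B 0 v τ ≠ 0) (hAw : A 0 (u - v) τ ≠ 0) (hBw : B 0 (u - v) τ ≠ 0) :
    Spp u τ * (zeta1 (v - u) (τ/2) - zeta1 v (τ/2)) + 4 * (Real.pi : ℂ) * Complex.I * St u τ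
      + Sp u τ * wp1 (u - v) (τ/2) + Sp v τ * Spp (u - v) τ = 0 := by
  have hVu : V0 u τ ≠ 0 := mul_ne_zero hAu hBu
  have hVw : V0 (u - v) τ ≠ 0 := mul_ne_zero hAw hBw
  have hf : ph 0 τ ≠ 0 := by
    intro h0
    rw [V0_eq u τ h, h0, zero_mul] at hVu
    exact hVu rfl
  have hpi : (Real.pi : ℂ) ≠ 0 := by simp [Real.pi_ne_zero]
  have hI := Complex.I_ne_zero
  have ez : zeta1 (v - u) (τ/2) = - (V1 (u - v) τ / V0 (u - v) τ) := by
    rw [zeta_half _ τ h hf, ← neg_sub u v, V0_neg _ _ h, V1_neg _ _ h, div_neg]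
  have k0 := key0 v (u - v) τ h
  have k1 := key1 v (u - v) τ h
  rw [add_sub_cancel] at k0 k1
  have et : 4 * (Real.pi : ℂ) * Complex.I * St u τ =
      ((A 3 u τ * A 0 u τ - A 1 u τ * A 2 u τ) / A 0 u τ ^ 2
    - (B 3 u τ * B 0 u τ - B 1 u τ * B 2 u τ) / B 0 u τ ^ 2) := by
    rw [St]; field_simp
  rw [ez, et, zeta_half _ τ h hf, wp_half _ τ h hf hVw, Spp_eq u τ h hAu hBu,
    Spp_eq _ τ h hAw hBw, Sp_eq u τ h, Sp_eq v τ h]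
  generalize u - v = w at *
  simp only [Su, V0, V1, V2, W0, W1, W2] at *
  generalize A 0 u τ = a0 at *
  generalize B 0 u τ = b0 at *
  generalize A 0 v τ = c0 at *
  generalize B 0 v τ = d0 at *
  generalize A 0 w τ = e0 at *
  generalize B 0 w τ = g0 at *
  -- pass to logarithmic variables
  obtain ⟨a1, ha1⟩ : ∃ z, A 1 u τ = z * a0 := ⟨A 1 u τ / a0, by field_simp⟩
  obtain ⟨a2, ha2⟩ : ∃ z, A 2 u τ = z * a0 := ⟨A 2 u τ / a0, by field_simp⟩
  obtain ⟨a3, ha3⟩ : ∃ z, A 3 u τ = z * a0 := ⟨A 3 u τ / a0, by field_simp⟩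
  obtain ⟨b1, hb1⟩ : ∃ z, B 1 u τ = z * b0 := ⟨B 1 u τ / b0, by field_simp⟩
  obtain ⟨b2, hb2⟩ : ∃ z, B 2 u τ = z * b0 := ⟨B 2 u τ / b0, by field_simp⟩
  obtain ⟨b3, hb3⟩ : ∃ z, B 3 u τ = z * b0 := ⟨B 3 u τ / b0, by field_simp⟩
  obtain ⟨c1, hc1⟩ : ∃ z, A 1 v τ = z * c0 := ⟨A 1 v τ / c0, by field_simp⟩
  obtain ⟨d1, hd1⟩ : ∃ z, B 1 v τ = z * d0 := ⟨B 1 v τ / d0, by field_simp⟩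
  obtain ⟨e1, he1⟩ : ∃ z, A 1 w τ = z * e0 := ⟨A 1 w τ / e0, by field_simp⟩
  obtain ⟨e2, he2⟩ : ∃ z, A 2 w τ = z * e0 := ⟨A 2 w τ / e0, by field_simp⟩
  obtain ⟨g1, hg1⟩ : ∃ z, B 1 w τ = z * g0 := ⟨B 1 w τ / g0, by field_simp⟩
  obtain ⟨g2, hg2⟩ : ∃ z, B 2 w τ = z * g0 := ⟨B 2 w τ / g0, by field_simp⟩
  simp only [ha1, ha2, ha3, hb1, hb2, hb3, hc1, hd1, he1, he2, hg1, hg2] at *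
  have hP : a0 * b0 * (c0 * d0) * (e0 * g0) ≠ 0 := by
    simp [hAu, hBu, hAv, hBv, hAw, hBw]
  have m0 : (c1 - d1) * (e1 - g1) + (a2 - b2) = (a1 - b1) * (c1 + d1 + e1 + g1) := by
    apply mul_left_cancel₀ hP
    linear_combination k0
  have m1 : (c1 - d1) * ((e2 - g2) + (e1 - g1) * (a1 + b1)) + (a3 + a2 * b1 - a1 * b2 - b3)
      + (a2 - b2) * (e1 + g1)
      = (a2 - b2) * (c1 + d1 + e1 + g1)
       + (a1 - b1) * ((c1 + d1) * (e1 + g1) + (e2 + 2 * e1 * g1 + g2)) := by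
    apply mul_left_cancel₀ hP
    linear_combination k1
  have r1 : (a2 * a0 * a0 - a1 * a0 * (a1 * a0)) / a0 ^ 2 = a2 - a1 * a1 := by field_simp
  have r2 : (b2 * b0 * b0 - b1 * b0 * (b1 * b0)) / b0 ^ 2 = b2 - b1 * b1 := by field_simp
  have r3 : (e2 * e0 * e0 - e1 * e0 * (e1 * e0)) / e0 ^ 2 = e2 - e1 * e1 := by field_simp
  have r4 : (g2 * g0 * g0 - g1 * g0 * (g1 * g0)) / g0 ^ 2 = g2 - g1 * g1 := by field_simp
  have r5 : (a3 * a0 * a0 - a1 * a0 * (a2 * a0)) / a0 ^ 2 = a3 - a1 * a2 := by field_simp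
  have r6 : (b3 * b0 * b0 - b1 * b0 * (b2 * b0)) / b0 ^ 2 = b3 - b1 * b2 := by field_simp
  have r7 : (e1 * e0 * g0 + e0 * (g1 * g0)) / (e0 * g0) = e1 + g1 := by field_simp
  have r8 : (c1 * c0 * d0 + c0 * (d1 * d0)) / (c0 * d0) = c1 + d1 := by field_simp
  have r9 : ((e2 * e0 * g0 + 2 * (e1 * e0) * (g1 * g0) + e0 * (g2 * g0)) * (e0 * g0)
      - (e1 * e0 * g0 + e0 * (g1 * g0)) * (e1 * e0 * g0 + e0 * (g1 * g0))) / (e0 * g0) ^ 2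
      = e2 + 2 * e1 * g1 + g2 - (e1 + g1) ^ 2 := by field_simp
  rw [r1, r2, r3, r4, r5, r6, r7, r8, r9, mul_div_cancel_right₀ _ hAu, mul_div_cancel_right₀ _ hBu,
    mul_div_cancel_right₀ _ hAv, mul_div_cancel_right₀ _ hBv]
  linear_combination m1 - (a1 + b1 + e1 + g1) * m0

lemma V2_neg (x τ : ℂ) (h : 0 < τ.im) : V2 (-x) τ = - V2 x τ := by
  have h2 := (V1_deriv (-x) τ h).comp x (hasDerivAt_neg x)
  have e : ((fun v => V1 v τ) ∘ fun v => -v) = fun v => V1 v τ := funext (fun v => V1_neg v τ h)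
  have h4 : HasDerivAt (fun v => V1 v τ) (V2 (-x) τ * -1) x := by rw [← e]; exact h2
  have := h4.unique (V1_deriv x τ h)
  linear_combination -this

lemma wp_half_neg (u τ : ℂ) (h : 0 < τ.im) (hV : V0 u τ ≠ 0) :
    wp1 (-u) (τ/2) = wp1 u (τ/2) := by
  have hf : ph 0 τ ≠ 0 := by
    intro h0
    rw [V0_eq u τ h, h0, zero_mul] at hV
    exact hV rfl
  have hV' : V0 (-u) τ ≠ 0 := by rw [V0_neg u τ h]; exact neg_ne_zero.mpr hV
  rw [wp_half u τ h hf hV, wp_half (-u) τ h hf hV', V0_neg u τ h, V1_neg u τ h, V2_neg u τ h]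
  simp

end GTaux

/-- Γ_{ij} is half the logarithmic λ_j-derivative of g_i (identity (c2)):
∂/∂λ_j [S'(ξ_i,τ)² ∂τ/∂λ_i] = −(1/(2πi)) S'(ξ_i)S'(ξ_j)S''(ξ_i−ξ_j)(∂τ/∂λ_i)(∂τ/∂λ_j);
equivalently 2Γ_{ij} g_i = ∂g_i/∂λ_j. -/
theorem Gam_is_half_log_derivative
    (N : ℕ) (U : Set (Fin N → ℝ)) (hU : IsOpen U)
    (ξ : Fin N → (Fin N → ℝ) → ℂ) (τ : (Fin N → ℝ) → ℂ)
    (hξC2 : ∀ i, ContDiffOn ℝ 2 (ξ i) U)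
    (hτC2 : ContDiffOn ℝ 2 τ U)
    (hup : ∀ x ∈ U, 0 < (τ x).im)
    -- the elliptic Gibbons–Tsarev system
    (hGT1 : ∀ j k : Fin N, j ≠ k → ∀ x ∈ U,
      pdC j (ξ k) x = 1 / (4 * (Real.pi : ℂ) * Complex.I)
        * (zeta1 (ξ j x - ξ k x) (τ x / 2) - zeta1 (ξ j x) (τ x / 2)) * pdC j τ x)
    (hGT2 : ∀ j k : Fin N, j ≠ k → ∀ x ∈ U,
      pdC k (pdC j τ) x = 1 / (2 * (Real.pi : ℂ) * Complex.I)
        * wp1 (ξ k x - ξ j x) (τ x / 2) * pdC k τ x * pdC j τ x)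
    -- nonvanishing of the theta-function values appearing in denominators
    (hnz1 : ∀ i, ∀ x ∈ U, theta1 (ξ i x) (τ x) ≠ 0)
    (hnz2 : ∀ i, ∀ x ∈ U, theta4 (ξ i x) (τ x) ≠ 0)
    (hnz3 : ∀ i, ∀ x ∈ U, theta1 (ξ i x) (τ x / 2) ≠ 0)
    (hnz4 : ∀ i j : Fin N, i ≠ j → ∀ x ∈ U, theta1 (ξ i x - ξ j x) (τ x) ≠ 0)
    (hnz5 : ∀ i j : Fin N, i ≠ j → ∀ x ∈ U, theta4 (ξ i x - ξ j x) (τ x) ≠ 0)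
    (hnz6 : ∀ i j : Fin N, i ≠ j → ∀ x ∈ U, theta1 (ξ i x - ξ j x) (τ x / 2) ≠ 0)
    (hnzS : ∀ i, ∀ x ∈ U, Sp (ξ i x) (τ x) ≠ 0) :
    ∀ i j : Fin N, i ≠ j → ∀ x ∈ U,
      pdC j (fun y => Sp (ξ i y) (τ y) ^ 2 * pdC i τ y) x
          = -(1 / (2 * (Real.pi : ℂ) * Complex.I))
            * Sp (ξ i x) (τ x) * Sp (ξ j x) (τ x) * Spp (ξ i x - ξ j x) (τ x)
            * pdC i τ x * pdC j τ x
      ∧ 2 * Gam ξ τ i j x * gMetric ξ τ i x = pdC j (gMetric ξ τ i) x := by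
  intro i j hij x hx
  have hxU : U ∈ nhds x := hU.mem_nhds hx
  have hτ := hup x hx
  have hAi : GTaux.A 0 (ξ i x) (τ x) ≠ 0 := by rw [← GTaux.theta1_eq]; exact hnz1 i x hx
  have hBi : GTaux.B 0 (ξ i x) (τ x) ≠ 0 := by rw [← GTaux.theta4_eq]; exact hnz2 i x hx
  have hAj : GTaux.A 0 (ξ j x) (τ x) ≠ 0 := by rw [← GTaux.theta1_eq]; exact hnz1 j x hx
  have hBj : GTaux.B 0 (ξ j x) (τ x) ≠ 0 := by rw [← GTaux.theta4_eq]; exact hnz2 j x hx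
  have hAw : GTaux.A 0 (ξ i x - ξ j x) (τ x) ≠ 0 := by
    rw [← GTaux.theta1_eq]; exact hnz4 i j hij x hx
  have hBw : GTaux.B 0 (ξ i x - ξ j x) (τ x) ≠ 0 := by
    rw [← GTaux.theta4_eq]; exact hnz5 i j hij x hx
  have hid := GTaux.main_id (ξ i x) (ξ j x) (τ x) hτ hAi hBi hAj hBj hAw hBw
  have dξ : HasFDerivAt (ξ i) (fderiv ℝ (ξ i) x) x :=
    (((hξC2 i).contDiffAt hxU).differentiableAt (by norm_num)).hasFDerivAt
  have dτ : HasFDerivAt τ (fderiv ℝ τ x) x :=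
    ((hτC2.contDiffAt hxU).differentiableAt (by norm_num)).hasFDerivAt
  have dp : HasFDerivAt (pdC i τ) (fderiv ℝ (pdC i τ) x) x := by
    have h1 : ContDiffAt ℝ 1 (fderiv ℝ τ) x :=
      (hτC2.contDiffAt hxU).fderiv_right (by norm_num)
    have h2 : DifferentiableAt ℝ (fderiv ℝ τ) x := h1.differentiableAt (by norm_num)
    have h3 : DifferentiableAt ℝ (fun y => fderiv ℝ τ y (Pi.single i 1)) x :=
      h2.clm_apply (differentiableAt_const _)
    exact DifferentiableAt.hasFDerivAt (f := pdC i τ) h3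
  have dS : HasFDerivAt (fun y => Sp (ξ i y) (τ y)) _ x :=
    ((GTaux.Sp_fderiv (ξ i x) (τ x) hτ hAi hBi).restrictScalars ℝ).comp
      (f := fun y => (ξ i y, τ y)) x (dξ.prodMk dτ)
  have hSd : DifferentiableAt ℝ (fun y => Sp (ξ i y) (τ y)) x := dS.differentiableAt
  have hSj : fderiv ℝ (fun y => Sp (ξ i y) (τ y)) x (Pi.single j 1)
      = Spp (ξ i x) (τ x) * pdC j (ξ i) x + GTaux.St (ξ i x) (τ x) * pdC j τ x := by
    rw [dS.fderiv, GTaux.Spp_eq _ _ hτ hAi hBi]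
    simp [GTaux.dl_apply, pdC]
  have dF := (hSd.hasFDerivAt.mul hSd.hasFDerivAt).mul dp
  have hpi : (Real.pi : ℂ) ≠ 0 := by simp [Real.pi_ne_zero]
  have hI := Complex.I_ne_zero
  have first : pdC j (fun y => Sp (ξ i y) (τ y) ^ 2 * pdC i τ y) x
          = -(1 / (2 * (Real.pi : ℂ) * Complex.I))
            * Sp (ξ i x) (τ x) * Sp (ξ j x) (τ x) * Spp (ξ i x - ξ j x) (τ x)
            * pdC i τ x * pdC j τ x := by
    have e : (fun y => Sp (ξ i y) (τ y) ^ 2 * pdC i τ y) =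
        ((fun y => Sp (ξ i y) (τ y)) * fun y => Sp (ξ i y) (τ y)) * pdC i τ := by
      funext y; simp only [Pi.mul_apply]; ring
    have h2 : fderiv ℝ (pdC i τ) x (Pi.single j 1) = 1 / (2 * (Real.pi : ℂ) * Complex.I)
        * wp1 (ξ i x - ξ j x) (τ x / 2) * pdC j τ x * pdC i τ x := by
      have h0 := hGT2 i j hij x hx
      rw [← neg_sub, GTaux.wp_half_neg _ _ hτ (mul_ne_zero hAw hBw)] at h0
      exact h0
    have h1 := hGT1 j i hij.symm x hx
    have hD : pdC j (((fun y => Sp (ξ i y) (τ y)) * fun y => Sp (ξ i y) (τ y)) * pdC i τ) x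
        = 2 * Sp (ξ i x) (τ x) * fderiv ℝ (fun y => Sp (ξ i y) (τ y)) x (Pi.single j 1) * pdC i τ x
          + Sp (ξ i x) (τ x) ^ 2 * fderiv ℝ (pdC i τ) x (Pi.single j 1) := by
      rw [pdC, dF.fderiv]
      simp
      ring
    rw [e, hD, hSj, h2, h1]
    have e4 : 1 / (2 * (Real.pi : ℂ) * Complex.I) = 2 * (1 / (4 * (Real.pi : ℂ) * Complex.I)) := by
      field_simp; norm_num
    have e5 : 1 / (4 * (Real.pi : ℂ) * Complex.I) * (4 * (Real.pi : ℂ) * Complex.I) = 1 := by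
      field_simp
    rw [e4]
    generalize 1 / (4 * (Real.pi : ℂ) * Complex.I) = c at *
    linear_combination (2 * c * Sp (ξ i x) (τ x) * pdC i τ x * pdC j τ x) * hid
      - (2 * Sp (ξ i x) (τ x) * pdC i τ x * pdC j τ x * GTaux.St (ξ i x) (τ x)) * e5
  refine ⟨first, ?_⟩
  have hg : pdC j (gMetric ξ τ i) x = 1 / (4 * (Real.pi : ℂ) * Complex.I) *
      pdC j (fun y => Sp (ξ i y) (τ y) ^ 2 * pdC i τ y) x := by
    have e : gMetric ξ τ i = fun y => 1 / (4 * (Real.pi : ℂ) * Complex.I) *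
        (Sp (ξ i y) (τ y) ^ 2 * pdC i τ y) := by
      funext y; rw [gMetric]; ring
    have hd : DifferentiableAt ℝ (fun y => Sp (ξ i y) (τ y) ^ 2 * pdC i τ y) x :=
      (hSd.pow 2).mul dp.differentiableAt
    rw [e]
    unfold pdC at hd ⊢
    rw [fderiv_const_mul hd]
    simp
  rw [hg, first, Gam, gMetric]
  have hS := hnzS i x hx
  field_simp
  ring
end
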